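/- arXiv:1702.03961 — 6 statements merged into one kernel-verified Lean document; each statement's English description precedes it below -/
import Mathlib

section
/- For every ε > 0 there exists N such that for all n ≥ N the following holds: for every NFA M with n states over any finite nonempty alphabet Σ, if M has a universal length, then its minimal universality length is at most exp((1 + ε)·2^(n/2)·√(n·log 2)). -/
/-- `ℓ` is a universal length for the language `L`: every word of length `ℓ` belongs to `L`. -/
def IsUnivLength {α : Type*} (L : Language α) (ℓ : ℕ) : Prop :=
  ∀ w : List α, w.length = ℓ → w ∈ L

/-!
Determinize: the subset automaton has `m = 2 ^ n` states, and its residual languages are monotone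
in the state with respect to inclusion. For a state `A` on a cycle, the set of lengths of words
rejected from `A` is periodic past a preperiod of `m ^ 2`, so the minimal universality length is
at most a polynomial in `m` times the least common multiple of the periods of these states.

All prime powers dividing that multiple are at most `m`, so the primes up to `√m` are negligible.
A prime `p > √m` divides it at most once, and distinct such primes divide the periods of disjoint
sets of states. If `p` is not itself a period, then some period is at least `2 * p`, and the
states along the corresponding cycle give `2 * p` states for `p`. The primes that are themselves
periods come from cycles that together form an antichain: if `A ≤ B` have coprime periods, then
the rejected lengths of `B` are among those of `A`, which forces one of the two sets to be empty
or everything. By Sperner's theorem these primes contribute `o(m)`, so the large primes have sum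
at most `(1 + o(1)) * m / 2`.

Maximizing `∑ log p` under this constraint is Landau's problem. The saving of a factor `2` makes
Chebyshev's `θ x ≤ log 4 * x` sufficient in place of the prime number theorem, and the optimal
truncation point `x = scale m / (2 * √(log 2))` gives the constant `√(log 2) < 1`.
-/

namespace NFAUniversality

open Function Real
open scoped Nat.Prime

section PrimeSums

open Finset Chebyshev

/-- Abel summation turns the left-hand side into `∫ t in 0..x, θ t`. -/
theorem sum_sub_mul_log_le {x : ℝ} (hx : 0 ≤ x) :
    ∑ p ∈ Nat.primesLE ⌊x⌋₊, (x - p) * log p ≤ log 2 * x ^ 2 := by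
  let c (k : ℕ) : ℝ := if k.Prime then log k else 0
  have htheta (t : ℝ) : ∑ k ∈ Icc 0 ⌊t⌋₊, c k = theta t := by rw [theta_eq_sum_Icc, sum_filter]
  have hderiv : deriv (fun t : ℝ ↦ x - t) = fun _ ↦ -1 := by ext t; simp
  have habel : ∑ k ∈ Icc 0 ⌊x⌋₊, (x - k) * c k = ∫ t in Set.Ioc 0 x, theta t := by
    rw [sum_mul_eq_sub_integral_mul c hx (f := fun t ↦ x - t) (fun t _ ↦ by fun_prop)
      (by rw [hderiv]; exact MeasureTheory.integrableOn_const (by simp))]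
    simp only [hderiv, htheta, sub_self, zero_mul, neg_one_mul, MeasureTheory.integral_neg,
      zero_sub, neg_neg]
  have hint : ∫ t in 0..x, theta t ≤ ∫ t in 0..x, log 4 * t :=
    intervalIntegral.integral_mono_on hx theta_mono.intervalIntegrable
      (Continuous.intervalIntegrable (by fun_prop) _ _) fun t ht ↦ theta_le_log4_mul_x ht.1
  calc ∑ p ∈ Nat.primesLE ⌊x⌋₊, (x - p) * log p
      = ∑ k ∈ Icc 0 ⌊x⌋₊, (x - k) * c k := by
        simp only [Nat.primesLE_eq_filter_Icc_zero, sum_filter, c, mul_ite, mul_zero]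
    _ = ∫ t in 0..x, theta t := by rw [habel, intervalIntegral.integral_of_le hx]
    _ ≤ ∫ t in 0..x, log 4 * t := hint
    _ = log 2 * x ^ 2 := by
      rw [intervalIntegral.integral_const_mul, integral_id, show (4 : ℝ) = 2 ^ 2 by norm_num,
        log_pow]
      push_cast
      ring

/-- The slack `log x / x * p - log p` is nonnegative for `p > x`, and for `p ≤ x` the deficit is
summable by `sum_sub_mul_log_le`. -/
theorem sum_log_le {D : Finset ℕ} (hD : ∀ p ∈ D, p.Prime) {x : ℝ} (hx : exp 1 ≤ x) :
    ∑ p ∈ D, log p ≤ log 2 * x + log x / x * ∑ p ∈ D, (p : ℝ) := by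
  have hx0 : 0 < x := (exp_pos 1).trans_le hx
  have hterm (p : ℕ) (hp : p.Prime) :
      log p ≤ log x / x * p + if p ≤ ⌊x⌋₊ then (x - p) * log p / x else 0 := by
    have hp0 : (0 : ℝ) < p := mod_cast hp.pos
    split_ifs with h
    · rw [Nat.le_floor_iff hx0.le] at h
      calc log p = log p / x * p + (x - p) * log p / x := by field
        _ ≤ log x / x * p + (x - p) * log p / x := by gcongr
    · rw [Nat.le_floor_iff hx0.le, not_le] at h
      rw [add_zero, ← div_le_iff₀ hp0]
      exact log_div_self_antitoneOn hx (hx.trans h.le) h.le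
  have hsmall : ∑ p ∈ D with p ≤ ⌊x⌋₊, (x - p) * log p ≤ log 2 * x ^ 2 := by
    refine le_trans (sum_le_sum_of_subset_of_nonneg (fun p hp ↦ ?_) fun p hp _ ↦ ?_)
      (sum_sub_mul_log_le hx0.le)
    · rw [mem_filter] at hp
      exact Nat.mem_primesLE.2 ⟨hp.2, hD p hp.1⟩
    · have hpx := (Nat.le_floor_iff hx0.le).1 (Nat.le_of_mem_primesLE hp)
      exact mul_nonneg (sub_nonneg.2 hpx) (log_natCast_nonneg p)
  calc ∑ p ∈ D, log p
      ≤ ∑ p ∈ D, (log x / x * p + if p ≤ ⌊x⌋₊ then (x - p) * log p / x else 0) :=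
        sum_le_sum fun p hp ↦ hterm p (hD p hp)
    _ = (∑ p ∈ D with p ≤ ⌊x⌋₊, (x - p) * log p) / x + log x / x * ∑ p ∈ D, (p : ℝ) := by
      rw [sum_add_distrib, ← mul_sum, ← sum_filter, ← sum_div, add_comm]
    _ ≤ log 2 * x ^ 2 / x + log x / x * ∑ p ∈ D, (p : ℝ) := by gcongr
    _ = log 2 * x + log x / x * ∑ p ∈ D, (p : ℝ) := by field

theorem centralBinom_sq_mul_le (k : ℕ) : k.centralBinom ^ 2 * (2 * k + 1) ≤ 4 ^ (2 * k) := by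
  induction k with
  | zero => simp
  | succ k ih =>
    refine Nat.le_of_mul_le_mul_left ?_ (pow_pos k.succ_pos 2)
    calc (k + 1) ^ 2 * ((k + 1).centralBinom ^ 2 * (2 * (k + 1) + 1))
        = ((k + 1) * (k + 1).centralBinom) ^ 2 * (2 * k + 3) := by ring
      _ = 4 * (2 * k + 1) * (2 * k + 3) * (k.centralBinom ^ 2 * (2 * k + 1)) := by
        rw [k.succ_mul_centralBinom_succ]; ring
      _ ≤ 4 * (2 * k + 1) * (2 * k + 3) * 4 ^ (2 * k) := by gcongr
      _ ≤ 16 * (k + 1) ^ 2 * 4 ^ (2 * k) := Nat.mul_le_mul_right _ (by nlinarith)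
      _ = (k + 1) ^ 2 * 4 ^ (2 * (k + 1)) := by ring

theorem choose_half_sq_mul_le (n : ℕ) : n.choose (n / 2) ^ 2 * (n + 1) ≤ 4 ^ n := by
  obtain ⟨k, rfl | rfl⟩ := n.even_or_odd'
  · simpa [Nat.centralBinom] using centralBinom_sq_mul_le k
  · have hhalf : (2 * k + 1) / 2 = k := by omega
    have hcb : (k + 1).centralBinom = 2 * (2 * k + 1).choose k := by
      rw [Nat.centralBinom_eq_two_mul_choose, show 2 * (k + 1) = 2 * k + 1 + 1 by ring,
        Nat.choose_succ_succ', Nat.choose_symm_half]; ring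
    have h := centralBinom_sq_mul_le (k + 1)
    rw [hcb, show 2 * (k + 1) = 2 * k + 1 + 1 by ring, pow_succ 4] at h
    rw [hhalf]
    nlinarith

theorem log_le_primeCounting_mul_log_add {L m : ℕ}
    (hpow : ∀ p k : ℕ, p.Prime → p ^ k ∣ L → p ^ k ≤ m) :
    log L ≤ π ⌊√m⌋₊ * log m + ∑ p ∈ L.primeFactors with m < p ^ 2, log p := by
  have hsmall (p : ℕ) (hp : p ∈ L.primeFactors) : L.factorization p * log p ≤ log m := by
    have hp' := Nat.prime_of_mem_primeFactors hp
    rw [← log_pow, ← Nat.cast_pow]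
    exact log_le_log (mod_cast pow_pos hp'.pos _) (mod_cast hpow p _ hp' (L.ordProj_dvd p))
  have hlarge (p : ℕ) (hp : p ∈ L.primeFactors) (hmp : m < p ^ 2) :
      L.factorization p * log p ≤ log p := by
    refine mul_le_of_le_one_left (log_natCast_nonneg p) (mod_cast ?_)
    by_contra! h
    exact hmp.not_ge (hpow p 2 (Nat.prime_of_mem_primeFactors hp)
      ((Nat.pow_dvd_pow p h).trans (L.ordProj_dvd p)))
  have hcard : #{p ∈ L.primeFactors | ¬ m < p ^ 2} ≤ π ⌊√m⌋₊ := by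
    rw [nat_floor_real_sqrt_eq_nat_sqrt, ← Nat.primesLE_card_eq_primeCounting]
    refine card_le_card fun p hp ↦ ?_
    rw [mem_filter, not_lt, ← Nat.le_sqrt'] at hp
    exact Nat.mem_primesLE.2 ⟨hp.2, Nat.prime_of_mem_primeFactors hp.1⟩
  calc log L = ∑ p ∈ L.primeFactors, L.factorization p * log p := log_nat_eq_sum_factorization L
    _ = ∑ p ∈ L.primeFactors with ¬ m < p ^ 2, L.factorization p * log p +
        ∑ p ∈ L.primeFactors with m < p ^ 2, L.factorization p * log p := by
      rw [add_comm, sum_filter_add_sum_filter_not]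
    _ ≤ ∑ p ∈ L.primeFactors with ¬ m < p ^ 2, log m +
        ∑ p ∈ L.primeFactors with m < p ^ 2, log p := by
      refine add_le_add (sum_le_sum fun p hp ↦ ?_) (sum_le_sum fun p hp ↦ ?_)
      · exact hsmall p (mem_filter.1 hp).1
      · exact hlarge p (mem_filter.1 hp).1 (mem_filter.1 hp).2
    _ ≤ π ⌊√m⌋₊ * log m + ∑ p ∈ L.primeFactors with m < p ^ 2, log p := by
      rw [sum_const, nsmul_eq_mul]
      gcongr

end PrimeSums

section MonotonePeriodic

variable {X : Type*} [PartialOrder X] {f : X → X} {x : X}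

theorem iterate_eq_of_le_iterate (hf : Monotone f) (hx : x ∈ periodicPts f) {d : ℕ}
    (h : x ≤ f^[d] x) : f^[d] x = x := by
  obtain ⟨k, hk, hper⟩ := hx
  have hmono : Monotone fun j ↦ (f^[d])^[j] x := (hf.iterate d).monotone_iterate_of_le_map h
  refine le_antisymm ?_ h
  calc f^[d] x = (f^[d])^[1] x := rfl
    _ ≤ (f^[d])^[k] x := hmono hk
    _ = x := by rw [← iterate_mul, mul_comm, (hper.mul_const d).eq]

theorem eq_of_iterate_le_iterate (hf : Monotone f) (hx : x ∈ periodicPts f) {i j : ℕ}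
    (hi : i < minimalPeriod f x) (hj : j < minimalPeriod f x) (h : f^[i] x ≤ f^[j] x) :
    i = j := by
  have hper : IsPeriodicPt f (minimalPeriod f x) x := isPeriodicPt_minimalPeriod f x
  have hreturn : f^[minimalPeriod f x - i] (f^[i] x) = x := by
    rw [← iterate_add_apply, Nat.sub_add_cancel hi.le, hper.eq]
  have hback : f^[minimalPeriod f x - i + j] x = x := by
    refine iterate_eq_of_le_iterate hf hx ?_
    calc x = f^[minimalPeriod f x - i] (f^[i] x) := hreturn.symm
      _ ≤ f^[minimalPeriod f x - i] (f^[j] x) := hf.iterate _ h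
      _ = f^[minimalPeriod f x - i + j] x := (iterate_add_apply ..).symm
  refine iterate_injOn_Iio_minimalPeriod hi hj ?_
  calc f^[i] x = f^[i] (f^[minimalPeriod f x - i + j] x) := by rw [hback]
    _ = f^[minimalPeriod f x + j] x := by
      rw [← iterate_add_apply, ← add_assoc, Nat.add_sub_cancel' hi.le]
    _ = f^[j] x := by rw [add_comm, iterate_add_apply, hper.eq]

end MonotonePeriodic

section Shift

/-- The left shift on sets of natural numbers: `shift S` is the translate of `S` by `-1`, cut off
at `0`. Thus `Function.IsPeriodicPt shift k S` says that `S` is purely periodic with period `k`. -/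
def shift (S : Set ℕ) : Set ℕ := {x | x + 1 ∈ S}

theorem mem_iterate_shift {S : Set ℕ} {n x : ℕ} : x ∈ shift^[n] S ↔ x + n ∈ S := by
  induction n generalizing S with
  | zero => rfl
  | succ n ih => rw [iterate_succ_apply, ih]; rfl

theorem shift_monotone : Monotone shift := fun _ _ h _ hx ↦ h hx

theorem minimalPeriod_shift_empty : minimalPeriod shift ∅ = 1 :=
  minimalPeriod_eq_one_iff_isFixedPt.2 rfl

theorem minimalPeriod_shift_univ : minimalPeriod shift Set.univ = 1 :=
  minimalPeriod_eq_one_iff_isFixedPt.2 rfl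

theorem mem_iff_of_modEq {S : Set ℕ} {k x y : ℕ} (hS : IsPeriodicPt shift k S)
    (hxy : x ≡ y [MOD k]) : x ∈ S ↔ y ∈ S := by
  have key : shift^[x] S = shift^[y] S := by
    rw [← hS.iterate_mod_apply x, ← hS.iterate_mod_apply y, hxy]
  have := Set.ext_iff.1 key 0
  simpa only [mem_iterate_shift, zero_add] using this

theorem eq_univ_of_coprime {S T : Set ℕ} {p q : ℕ} (hS : IsPeriodicPt shift p S)
    (hT : IsPeriodicPt shift q T) (hpq : p.Coprime q) (hST : S ⊆ T) (hne : S.Nonempty) :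
    T = Set.univ := by
  obtain ⟨y, hy⟩ := hne
  refine Set.eq_univ_of_forall fun x ↦ ?_
  obtain ⟨z, hzy, hzx⟩ := Nat.chineseRemainder hpq y x
  exact (mem_iff_of_modEq hT hzx).1 (hST ((mem_iff_of_modEq hS hzy).2 hy))

end Shift

section Recurrent

variable {α V : Type*} (M : DFA α V)

/-- The lengths of the words outside `L`, that is, the lengths that are not universal. -/
def nonUnivLengths (L : Language α) : Set ℕ := {ℓ | ¬ IsUnivLength L ℓ}

theorem mem_nonUnivLengths {L : Language α} {ℓ : ℕ} :
    ℓ ∈ nonUnivLengths L ↔ ∃ w : List α, w.length = ℓ ∧ w ∉ L := by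
  simp only [nonUnivLengths, IsUnivLength, Set.mem_ofPred_eq, not_forall, exists_prop]

theorem nonUnivLengths_antitone : Antitone (nonUnivLengths (α := α)) :=
  fun _ _ h _ hx hu ↦ hx fun w hw ↦ h (hu w hw)

theorem add_length_mem_nonUnivLengths {A : V} {w : List α} {x : ℕ}
    (hx : x ∈ nonUnivLengths (M.acceptsFrom (M.evalFrom A w))) :
    x + w.length ∈ nonUnivLengths (M.acceptsFrom A) := by
  obtain ⟨v, rfl, hv⟩ := mem_nonUnivLengths.1 hx
  refine mem_nonUnivLengths.2 ⟨w ++ v, by rw [List.length_append, add_comm], ?_⟩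
  rwa [M.mem_acceptsFrom, M.evalFrom_of_append]

variable [Fintype V]

theorem exists_length_lt_card_evalFrom_eq (A : V) (w : List α) :
    ∃ v : List α, v.length < Fintype.card V ∧ M.evalFrom A v = M.evalFrom A w := by
  induction hn : w.length using Nat.strong_induction_on generalizing w with
  | _ n ih =>
    rcases lt_or_ge w.length (Fintype.card V) with hlt | hge
    · exact ⟨w, hlt, rfl⟩
    obtain ⟨B, a, b, c, rfl, -, hb, hA, -, hend⟩ := M.evalFrom_split hge rfl
    have hshort : (a ++ c).length < n := by
      have := List.length_pos_iff.2 hb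
      simp only [List.length_append] at hn ⊢
      omega
    obtain ⟨v, hv, hvw⟩ := ih _ hshort (a ++ c) rfl
    exact ⟨v, hv, by rw [hvw, M.evalFrom_of_append, hA, hend]⟩

/-- The product of `M` with a counter modulo `k`, which records the length of the word read. -/
def counter (k : ℕ) : DFA α (V × ZMod k) where
  step s a := (M.step s.1 a, s.2 + 1)
  start := (M.start, 0)
  accept := {s | s.1 ∈ M.accept}

omit [Fintype V] in
theorem counter_evalFrom (k : ℕ) (A : V) (i : ZMod k) (w : List α) :
    (counter M k).evalFrom (A, i) w = (M.evalFrom A w, i + w.length) := by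
  induction w generalizing A i with
  | nil => simp
  | cons a w ih =>
    rw [DFA.evalFrom_cons, DFA.evalFrom_cons]
    refine (ih _ _).trans ?_
    simp only [List.length_cons, Nat.cast_add, Nat.cast_one, Prod.mk.injEq, true_and]
    ring

theorem exists_length_lt_modEq_evalFrom_eq (A : V) (w : List α) {k : ℕ} (hk : k ≠ 0) :
    ∃ v : List α, v.length < Fintype.card V * k ∧ v.length ≡ w.length [MOD k] ∧
      M.evalFrom A v = M.evalFrom A w := by
  have : NeZero k := ⟨hk⟩
  obtain ⟨v, hv, heq⟩ := exists_length_lt_card_evalFrom_eq (counter M k) (A, 0) w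
  simp only [counter_evalFrom, Prod.mk.injEq, zero_add, ZMod.natCast_eq_natCast_iff] at heq
  rw [Fintype.card_prod, ZMod.card] at hv
  exact ⟨v, hv, heq.2, heq.1⟩

/-- The lengths, reduced by `(card V) ^ 2`, of the rejected words of length at least `(card V) ^ 2`
starting from state `A`. From there on the sequence is periodic if `A` lies on a cycle. -/
def tail (A : V) : Set ℕ := shift^[Fintype.card V ^ 2] (nonUnivLengths (M.acceptsFrom A))

/-- The least period of the rejected lengths from `A`, after the preperiod. -/
noncomputable def period (A : V) : ℕ := minimalPeriod shift (tail M A)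

omit [Fintype V] in
/-- The state `A` lies on a cycle of `M`. -/
def IsRecurrent (A : V) : Prop := ∃ w : List α, w ≠ [] ∧ M.evalFrom A w = A

theorem tail_evalFrom_subset (A : V) (w : List α) :
    tail M (M.evalFrom A w) ⊆ shift^[w.length] (tail M A) := by
  rw [tail, tail, ← iterate_add_apply, add_comm, iterate_add_apply]
  exact shift_monotone.iterate _ fun x hx ↦
    mem_iterate_shift.2 (add_length_mem_nonUnivLengths M hx)

variable {M} {A B : V}

omit [Fintype V] in
theorem mem_of_modEq_of_le {w : List α} (hA : M.evalFrom A w = A) {x y : ℕ} (hxy : x ≤ y)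
    (hmod : x ≡ y [MOD w.length]) (hx : x ∈ nonUnivLengths (M.acceptsFrom A)) :
    y ∈ nonUnivLengths (M.acceptsFrom A) := by
  obtain ⟨j, hj⟩ := (Nat.modEq_iff_dvd' hxy).1 hmod
  obtain rfl : y = x + w.length * j := by omega
  clear hj hmod hxy
  induction j with
  | zero => exact hx
  | succ j ih =>
    rw [mul_add_one, ← add_assoc]
    exact add_length_mem_nonUnivLengths M (by rwa [hA])

theorem isPeriodicPt_tail_of_evalFrom_eq {w : List α} (hA : M.evalFrom A w = A)
    (hw : w.length ≤ Fintype.card V) : IsPeriodicPt shift w.length (tail M A) := by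
  rcases eq_or_ne w [] with rfl | hne
  · rfl
  refine Set.Subset.antisymm (fun x hx ↦ ?_) ?_
  · obtain ⟨u, hu, hrej⟩ := mem_nonUnivLengths.1 (mem_iterate_shift.1 (mem_iterate_shift.1 hx))
    obtain ⟨v, hlt, hmod, heq⟩ :=
      exists_length_lt_modEq_evalFrom_eq M A u (List.length_pos_iff.2 hne).ne'
    have hv : v.length ∈ nonUnivLengths (M.acceptsFrom A) :=
      mem_nonUnivLengths.2 ⟨v, rfl, by rwa [M.mem_acceptsFrom, heq]⟩
    refine mem_iterate_shift.2 (mem_of_modEq_of_le hA ?_ ?_ hv)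
    · nlinarith
    · rw [hu, add_right_comm] at hmod
      exact hmod.trans (Nat.add_modEq_right)
  · simpa only [hA] using tail_evalFrom_subset M A w

theorem IsRecurrent.exists_length_le_card (hA : IsRecurrent M A) :
    ∃ w : List α, w ≠ [] ∧ w.length ≤ Fintype.card V ∧ M.evalFrom A w = A := by
  obtain ⟨w, hw, hcycle⟩ := hA
  obtain ⟨a, u, rfl⟩ := List.exists_cons_of_ne_nil hw
  obtain ⟨v, hv, heq⟩ := exists_length_lt_card_evalFrom_eq M (M.step A a) u
  refine ⟨a :: v, by simp, by simpa using hv, ?_⟩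
  rw [DFA.evalFrom_cons, heq, ← DFA.evalFrom_cons, hcycle]

theorem IsRecurrent.exists_isPeriodicPt (hA : IsRecurrent M A) :
    ∃ k, 0 < k ∧ k ≤ Fintype.card V ∧ IsPeriodicPt shift k (tail M A) := by
  obtain ⟨w, hw, hle, hcycle⟩ := hA.exists_length_le_card
  exact ⟨w.length, List.length_pos_iff.2 hw, hle, isPeriodicPt_tail_of_evalFrom_eq hcycle hle⟩

theorem IsRecurrent.tail_mem_periodicPts (hA : IsRecurrent M A) :
    tail M A ∈ periodicPts shift :=
  let ⟨k, hk, _, hper⟩ := hA.exists_isPeriodicPt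
  ⟨k, hk, hper⟩

theorem IsRecurrent.period_pos (hA : IsRecurrent M A) : 0 < period M A :=
  minimalPeriod_pos_of_mem_periodicPts hA.tail_mem_periodicPts

theorem IsRecurrent.period_le_card (hA : IsRecurrent M A) : period M A ≤ Fintype.card V :=
  let ⟨_, hk, hle, hper⟩ := hA.exists_isPeriodicPt
  (hper.minimalPeriod_le hk).trans hle

omit [Fintype V] in
theorem IsRecurrent.evalFrom (hA : IsRecurrent M A) {u v : List α}
    (h : M.evalFrom (M.evalFrom A u) v = A) : IsRecurrent M (M.evalFrom A u) := by
  obtain ⟨w, hw, hcycle⟩ := hA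
  exact ⟨v ++ w ++ u, by simp [hw], by simp only [DFA.evalFrom_of_append, h, hcycle]⟩

theorem tail_evalFrom (hA : IsRecurrent M A) {u v : List α}
    (h : M.evalFrom (M.evalFrom A u) v = A) :
    tail M (M.evalFrom A u) = shift^[u.length] (tail M A) := by
  have hsub := tail_evalFrom_subset M A u
  have hback : tail M A ⊆ shift^[v.length] (tail M (M.evalFrom A u)) := by
    simpa only [h] using tail_evalFrom_subset M (M.evalFrom A u) v
  have hback' := shift_monotone.iterate u.length hback
  rw [← iterate_add_apply] at hback'
  have hfix := iterate_eq_of_le_iterate shift_monotone (hA.evalFrom h).tail_mem_periodicPts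
    (hsub.trans hback')
  exact hsub.antisymm (hback'.trans hfix.subset)

theorem period_evalFrom (hA : IsRecurrent M A) {u v : List α}
    (h : M.evalFrom (M.evalFrom A u) v = A) : period M (M.evalFrom A u) = period M A := by
  rw [period, tail_evalFrom hA h, minimalPeriod_apply_iterate hA.tail_mem_periodicPts, period]

theorem IsRecurrent.period_le_length (hA : IsRecurrent M A) {w : List α} (hw : w ≠ [])
    (h : M.evalFrom A w = A) : period M A ≤ w.length := by
  have hper : shift^[w.length] (tail M A) = tail M A := by
    rw [← tail_evalFrom hA (v := []) (by simpa using h), h]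
  exact IsPeriodicPt.minimalPeriod_le (List.length_pos_iff.2 hw) hper

end Recurrent

section Antichain

open Finset

variable {α V : Type*} [Fintype V] [Preorder V] {M : DFA α V} {A B : V}

theorem tail_antitone (hM : Monotone M.acceptsFrom) : Antitone (tail M) :=
  fun _ _ h ↦ shift_monotone.iterate _ (nonUnivLengths_antitone (hM h))

theorem IsRecurrent.exists_antichain (hM : Monotone M.acceptsFrom) (hA : IsRecurrent M A) :
    ∃ O : Finset V, #O = period M A ∧ IsAntichain (· ≤ ·) (O : Set V) ∧
      ∀ B ∈ O, IsRecurrent M B ∧ period M B = period M A := by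
  classical
  obtain ⟨w, hw, hcycle⟩ := id hA
  let s (i : ℕ) : V := M.evalFrom A (w.take i)
  have hreturn (i : ℕ) : M.evalFrom (s i) (w.drop i) = A := by
    rw [← M.evalFrom_of_append, List.take_append_drop, hcycle]
  have hs {i j : ℕ} (hi : i < period M A) (hj : j < period M A) (hij : s i ≤ s j) : i = j := by
    have hlen := hA.period_le_length hw hcycle
    have htail := tail_antitone hM hij
    rw [tail_evalFrom hA (hreturn i), tail_evalFrom hA (hreturn j),
      List.length_take_of_le (hi.le.trans hlen), List.length_take_of_le (hj.le.trans hlen)] at htail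
    exact (eq_of_iterate_le_iterate shift_monotone hA.tail_mem_periodicPts hj hi htail).symm
  refine ⟨(range (period M A)).image s, ?_, ?_, ?_⟩
  · rw [card_image_of_injOn, card_range]
    intro i hi j hj hij
    exact hs (mem_range.1 hi) (mem_range.1 hj) hij.le
  · intro B hB C hC hne hle
    obtain ⟨i, hi, rfl⟩ := mem_image.1 hB
    obtain ⟨j, hj, rfl⟩ := mem_image.1 hC
    exact hne (congrArg s (hs (mem_range.1 hi) (mem_range.1 hj) hle))
  · intro B hB
    obtain ⟨i, -, rfl⟩ := mem_image.1 hB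
    exact ⟨hA.evalFrom (hreturn i), period_evalFrom hA (hreturn i)⟩

theorem period_eq_one_of_coprime_of_le (hM : Monotone M.acceptsFrom)
    (hAB : (period M A).Coprime (period M B)) (hle : A ≤ B) :
    period M A = 1 ∨ period M B = 1 := by
  rcases (tail M B).eq_empty_or_nonempty with hempty | hne
  · right
    rw [period, hempty, minimalPeriod_shift_empty]
  · left
    rw [period, eq_univ_of_coprime (isPeriodicPt_minimalPeriod shift (tail M B))
      (isPeriodicPt_minimalPeriod shift (tail M A)) hAB.symm (tail_antitone hM hle) hne,
      minimalPeriod_shift_univ]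

/-- The orbits form an antichain together, as states with coprime periods are incomparable. -/
theorem sum_le_of_pairwise_coprime (hM : Monotone M.acceptsFrom) {K : ℕ}
    (hK : ∀ s : Finset V, IsAntichain (· ≤ ·) (s : Set V) → #s ≤ K) {C : Finset ℕ}
    (hC : (C : Set ℕ).Pairwise Nat.Coprime) (hC1 : 1 ∉ C)
    (hper : ∀ p ∈ C, ∃ A, IsRecurrent M A ∧ period M A = p) : ∑ p ∈ C, p ≤ K := by
  classical
  have horbit (p : ℕ) (hp : p ∈ C) : ∃ O : Finset V, #O = p ∧ IsAntichain (· ≤ ·) (O : Set V) ∧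
      ∀ B ∈ O, IsRecurrent M B ∧ period M B = p := by
    obtain ⟨A, hA, rfl⟩ := hper p hp
    exact hA.exists_antichain hM
  choose! O hcard hanti hO using horbit
  have hdisj : (C : Set ℕ).PairwiseDisjoint O := fun p hp q hq hpq ↦
    disjoint_left.2 fun B hBp hBq ↦ hpq ((hO p hp B hBp).2.symm.trans (hO q hq B hBq).2)
  calc ∑ p ∈ C, p = ∑ p ∈ C, #(O p) := sum_congr rfl fun p hp ↦ (hcard p hp).symm
    _ = #(C.biUnion O) := (card_biUnion hdisj).symm
    _ ≤ K := hK _ ?_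
  intro B hB B' hB' hne hle
  obtain ⟨p, hp, hBp⟩ := mem_biUnion.1 hB
  obtain ⟨q, hq, hBq⟩ := mem_biUnion.1 hB'
  rcases eq_or_ne p q with rfl | hpq
  · exact hanti p hp hBp hBq hne hle
  have hcop := hC hp hq hpq
  rw [← (hO p hp B hBp).2, ← (hO q hq B' hBq).2] at hcop
  rcases period_eq_one_of_coprime_of_le hM hcop hle with h | h
  · exact hC1 (by rwa [← h, (hO p hp B hBp).2])
  · exact hC1 (by rwa [← h, (hO q hq B' hBq).2])

theorem period_le_card_filter_dvd [DecidablePred (IsRecurrent M)] (hM : Monotone M.acceptsFrom)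
    (hA : IsRecurrent M A) {p : ℕ} (hp : p ∣ period M A) :
    period M A ≤ #{B | IsRecurrent M B ∧ p ∣ period M B} := by
  obtain ⟨O, hcard, -, hO⟩ := hA.exists_antichain hM
  rw [← hcard]
  refine card_le_card fun B hB ↦ ?_
  rw [mem_filter_univ, (hO B hB).2]
  exact ⟨(hO B hB).1, hp⟩

omit [Preorder V] in
theorem pairwiseDisjoint_filter_dvd_period [DecidablePred (IsRecurrent M)] {D : Finset ℕ}
    (hprime : ∀ p ∈ D, p.Prime) (hsq : ∀ p ∈ D, Fintype.card V < p ^ 2) :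
    (D : Set ℕ).PairwiseDisjoint fun p ↦ ({B | IsRecurrent M B ∧ p ∣ period M B} : Finset V) := by
  intro p hp q hq hpq
  refine disjoint_left.2 fun B hBp hBq ↦ ?_
  rw [mem_filter_univ] at hBp hBq
  have hdvd : p * q ∣ period M B :=
    ((Nat.coprime_primes (hprime p hp) (hprime q hq)).2 hpq).mul_dvd_of_dvd_of_dvd hBp.2 hBq.2
  have hle : p * q ≤ Fintype.card V := (Nat.le_of_dvd hBp.1.period_pos hdvd).trans
    hBp.1.period_le_card
  refine hle.not_gt (Nat.mul_self_lt_mul_self_iff.1 ?_)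
  calc Fintype.card V * Fintype.card V < p ^ 2 * q ^ 2 := Nat.mul_lt_mul'' (hsq p hp) (hsq q hq)
    _ = p * q * (p * q) := by ring

/-- A prime `p` dividing a period gives `2 * p` states whose period is divisible by `p`, unless `p`
is itself a period. -/
theorem two_mul_sum_le (hM : Monotone M.acceptsFrom) {K : ℕ}
    (hK : ∀ s : Finset V, IsAntichain (· ≤ ·) (s : Set V) → #s ≤ K) {D : Finset ℕ}
    (hprime : ∀ p ∈ D, p.Prime) (hsq : ∀ p ∈ D, Fintype.card V < p ^ 2)
    (hper : ∀ p ∈ D, ∃ A, IsRecurrent M A ∧ p ∣ period M A) :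
    2 * ∑ p ∈ D, p ≤ Fintype.card V + K := by
  classical
  let E : Finset ℕ := {p ∈ D | ∃ A, IsRecurrent M A ∧ period M A = p}
  have hE : ∑ p ∈ E, p ≤ K := by
    refine sum_le_of_pairwise_coprime hM hK (fun p hp q hq hpq ↦ ?_) (fun h ↦ ?_)
      fun p hp ↦ (mem_filter.1 hp).2
    · exact (Nat.coprime_primes (hprime p (mem_filter.1 hp).1) (hprime q (mem_filter.1 hq).1)).2 hpq
    · exact Nat.not_prime_one (hprime 1 (mem_filter.1 h).1)
  have hclass (p : ℕ) (hp : p ∈ D) : 2 * p ≤ #{B | IsRecurrent M B ∧ p ∣ period M B} +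
      if ∃ A, IsRecurrent M A ∧ period M A = p then p else 0 := by
    obtain ⟨A, hA, hdvd⟩ := hper p hp
    have hle := period_le_card_filter_dvd hM hA hdvd
    obtain ⟨k, hk⟩ := hdvd
    have hpos := hA.period_pos
    split_ifs with hexact
    · nlinarith [Nat.pos_of_mul_pos_left (hk ▸ hpos)]
    · have hk1 : k ≠ 1 := fun h ↦ hexact ⟨A, hA, by rw [hk, h, mul_one]⟩
      have hk0 : k ≠ 0 := by rintro rfl; omega
      nlinarith [show 2 ≤ k by omega]
  calc 2 * ∑ p ∈ D, p
      ≤ ∑ p ∈ D, (#{B | IsRecurrent M B ∧ p ∣ period M B} +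
          if ∃ A, IsRecurrent M A ∧ period M A = p then p else 0) := by
        rw [mul_sum]; exact sum_le_sum hclass
    _ = #(D.biUnion fun p ↦ {B | IsRecurrent M B ∧ p ∣ period M B}) + ∑ p ∈ E, p := by
        rw [sum_add_distrib, sum_filter,
          card_biUnion (pairwiseDisjoint_filter_dvd_period hprime hsq)]
    _ ≤ Fintype.card V + K := add_le_add (card_le_univ _) hE

end Antichain

section GlobalPeriod

open Finset

open scoped Classical in
/-- The least common multiple of the periods of all recurrent states. -/
noncomputable def globalPeriod {α V : Type*} [Fintype V] (M : DFA α V) : ℕ :=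
  ({A | IsRecurrent M A} : Finset V).lcm (period M)

variable {α V : Type*} [Fintype V] {M : DFA α V}

theorem IsRecurrent.period_dvd_globalPeriod {A : V} (hA : IsRecurrent M A) :
    period M A ∣ globalPeriod M :=
  dvd_lcm (by simpa using hA)

theorem globalPeriod_ne_zero : globalPeriod M ≠ 0 := by
  rw [globalPeriod, ne_eq, Finset.lcm_eq_zero_iff]
  rintro ⟨A, hA, h0⟩
  exact (IsRecurrent.period_pos (by simpa using hA)).ne' h0

theorem exists_pow_dvd_period {p k : ℕ} (hp : p.Prime) (hk : k ≠ 0)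
    (hdvd : p ^ k ∣ globalPeriod M) : ∃ A, IsRecurrent M A ∧ p ^ k ∣ period M A := by
  classical
  have hpos (A : V) (hA : A ∈ ({A | IsRecurrent M A} : Finset V)) : period M A ≠ 0 :=
    (IsRecurrent.period_pos (by simpa using hA)).ne'
  rw [hp.pow_dvd_iff_le_factorization globalPeriod_ne_zero, globalPeriod,
    factorization_lcm hpos, Finset.le_sup_iff (Nat.pos_of_ne_zero hk)] at hdvd
  obtain ⟨A, hA, hle⟩ := hdvd
  exact ⟨A, by simpa using hA, (hp.pow_dvd_iff_le_factorization (hpos A hA)).2 hle⟩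

theorem pow_le_card_of_dvd_globalPeriod {p k : ℕ} (hp : p.Prime)
    (hdvd : p ^ k ∣ globalPeriod M) : p ^ k ≤ Fintype.card V := by
  rcases eq_or_ne k 0 with rfl | hk
  · exact Fintype.card_pos_iff.2 ⟨M.start⟩
  obtain ⟨A, hA, hA'⟩ := exists_pow_dvd_period hp hk hdvd
  exact (Nat.le_of_dvd hA.period_pos hA').trans hA.period_le_card

theorem add_globalPeriod_mem {t : ℕ} (ht : Fintype.card V + Fintype.card V ^ 2 ≤ t)
    (hmem : t ∈ nonUnivLengths M.accepts) : t + globalPeriod M ∈ nonUnivLengths M.accepts := by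
  obtain ⟨w, rfl, hw⟩ := mem_nonUnivLengths.1 hmem
  obtain ⟨A, a, b, c, rfl, hab, hb, hstart, hcycle, -⟩ :=
    M.evalFrom_split (le_trans (Nat.le_add_right _ _) ht) (rfl : M.evalFrom M.start w = _)
  have hrej : (b ++ c).length ∈ nonUnivLengths (M.acceptsFrom A) := by
    refine mem_nonUnivLengths.2 ⟨b ++ c, rfl, ?_⟩
    rwa [List.append_assoc, DFA.mem_accepts, DFA.eval, M.evalFrom_of_append, hstart] at hw
  simp only [List.length_append] at ht hrej ⊢
  obtain ⟨x, hx⟩ : ∃ x, b.length + c.length = x + Fintype.card V ^ 2 :=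
    ⟨b.length + c.length - Fintype.card V ^ 2, by omega⟩
  have hper : IsPeriodicPt shift (globalPeriod M) (tail M A) :=
    isPeriodicPt_iff_minimalPeriod_dvd.2 (IsRecurrent.period_dvd_globalPeriod ⟨b, hb, hcycle⟩)
  have htail : x ∈ tail M A := mem_iterate_shift.2 (hx ▸ hrej)
  rw [← hper.eq] at htail
  have hadd := mem_iterate_shift.1 (mem_iterate_shift.1 htail)
  rw [← hstart] at hadd
  have heq : a.length + b.length + c.length + globalPeriod M =
      x + globalPeriod M + Fintype.card V ^ 2 + a.length := by omega
  rw [heq]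
  exact add_length_mem_nonUnivLengths M hadd

theorem sInf_isUnivLength_lt (hM : ∃ ℓ, IsUnivLength M.accepts ℓ) :
    sInf {ℓ | IsUnivLength M.accepts ℓ} <
      Fintype.card V + Fintype.card V ^ 2 + globalPeriod M := by
  have huniv : IsUnivLength M.accepts (sInf {ℓ | IsUnivLength M.accepts ℓ}) := Nat.sInf_mem hM
  have hpos := Nat.pos_of_ne_zero (globalPeriod_ne_zero (M := M))
  by_contra! hge
  obtain ⟨t, ht⟩ := Nat.exists_eq_add_of_le' (le_of_add_le_right hge)
  have hnot : ¬ IsUnivLength M.accepts t :=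
    Nat.notMem_of_lt_sInf (s := {ℓ | IsUnivLength M.accepts ℓ}) (by omega)
  exact add_globalPeriod_mem (by omega) hnot (ht ▸ huniv)

theorem sInf_isUnivLength_le [Nontrivial V] (hM : ∃ ℓ, IsUnivLength M.accepts ℓ) :
    sInf {ℓ | IsUnivLength M.accepts ℓ} ≤ Fintype.card V ^ 3 * globalPeriod M := by
  have hlt := sInf_isUnivLength_lt hM
  have hcard : 2 ≤ Fintype.card V := Fintype.one_lt_card
  have hpos : 1 ≤ globalPeriod M := Nat.one_le_iff_ne_zero.2 globalPeriod_ne_zero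
  have hcube : Fintype.card V + Fintype.card V ^ 2 + 1 ≤ Fintype.card V ^ 3 := by nlinarith
  nlinarith

theorem log_globalPeriod_le [Preorder V] (hM : Monotone M.acceptsFrom) {K : ℕ}
    (hK : ∀ s : Finset V, IsAntichain (· ≤ ·) (s : Set V) → #s ≤ K) {x : ℝ} (hx : exp 1 ≤ x) :
    log (globalPeriod M) ≤ π ⌊√(Fintype.card V)⌋₊ * log (Fintype.card V) + log 2 * x +
      log x / x * ((Fintype.card V + K) / 2) := by
  let D : Finset ℕ := {p ∈ (globalPeriod M).primeFactors | Fintype.card V < p ^ 2}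
  have hprime (p : ℕ) (hp : p ∈ D) : p.Prime := Nat.prime_of_mem_primeFactors (mem_filter.1 hp).1
  have hsum : 2 * ∑ p ∈ D, p ≤ Fintype.card V + K := by
    refine two_mul_sum_le hM hK hprime (fun p hp ↦ (mem_filter.1 hp).2) fun p hp ↦ ?_
    simpa only [pow_one] using exists_pow_dvd_period (hprime p hp) one_ne_zero
      ((pow_one p).symm ▸ Nat.dvd_of_mem_primeFactors (mem_filter.1 hp).1)
  have hsum' : ∑ p ∈ D, (p : ℝ) ≤ (Fintype.card V + K) / 2 := by
    rw [le_div_iff₀' two_pos, ← Nat.cast_sum]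
    exact mod_cast hsum
  have hslope : 0 ≤ log x / x :=
    div_nonneg (log_nonneg ((one_le_exp zero_le_one).trans hx)) ((exp_pos 1).le.trans hx)
  calc log (globalPeriod M)
      ≤ π ⌊√(Fintype.card V)⌋₊ * log (Fintype.card V) + ∑ p ∈ D, log p :=
        log_le_primeCounting_mul_log_add fun p k hp ↦ pow_le_card_of_dvd_globalPeriod hp
    _ ≤ π ⌊√(Fintype.card V)⌋₊ * log (Fintype.card V) +
        (log 2 * x + log x / x * ∑ p ∈ D, (p : ℝ)) := by gcongr; exact sum_log_le hprime hx
    _ ≤ π ⌊√(Fintype.card V)⌋₊ * log (Fintype.card V) +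
        (log 2 * x + log x / x * ((Fintype.card V + K) / 2)) := by gcongr
    _ = _ := (add_assoc _ _ _).symm

/-- The bound on the logarithm of the minimal universality length of a deterministic automaton with
`m` states whose antichains have at most `K` elements. The parameter `x` is to be optimized. -/
noncomputable def logBound (m K x : ℝ) : ℝ :=
  3 * log m + π ⌊√m⌋₊ * log m + log 2 * x + log x / x * ((m + K) / 2)

theorem sInf_isUnivLength_le_exp_logBound [Preorder V] [Nontrivial V]
    (hM : Monotone M.acceptsFrom) {K : ℕ}
    (hK : ∀ s : Finset V, IsAntichain (· ≤ ·) (s : Set V) → #s ≤ K)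
    (huniv : ∃ ℓ, IsUnivLength M.accepts ℓ) {x : ℝ} (hx : exp 1 ≤ x) :
    (sInf {ℓ | IsUnivLength M.accepts ℓ} : ℕ) ≤ exp (logBound (Fintype.card V) K x) := by
  have hcard : (0 : ℝ) < Fintype.card V := mod_cast Fintype.card_pos
  have hperiod : (0 : ℝ) < globalPeriod M := mod_cast Nat.pos_of_ne_zero globalPeriod_ne_zero
  have hcube : log ((Fintype.card V : ℝ) ^ 3) = 3 * log (Fintype.card V) := by
    rw [log_pow, Nat.cast_ofNat]
  calc ((sInf {ℓ | IsUnivLength M.accepts ℓ} : ℕ) : ℝ)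
      ≤ Fintype.card V ^ 3 * globalPeriod M := mod_cast sInf_isUnivLength_le huniv
    _ = exp (3 * log (Fintype.card V) + log (globalPeriod M)) := by
      rw [exp_add, exp_log hperiod, ← hcube, exp_log (pow_pos hcard 3)]
    _ ≤ exp (logBound (Fintype.card V) K x) := by
      refine exp_le_exp.2 ?_
      rw [logBound]
      linarith [log_globalPeriod_le hM hK hx]

end GlobalPeriod

section SubsetAutomaton

open Finset

theorem toDFA_acceptsFrom_monotone {α Q : Type*} (M : NFA α Q) :
    Monotone M.toDFA.acceptsFrom := by
  intro S T hST w hw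
  obtain ⟨s, hs, hacc⟩ := M.toDFA.mem_acceptsFrom.1 hw
  refine M.toDFA.mem_acceptsFrom.2 ⟨s, ?_, hacc⟩
  have := M.evalFrom_union S T w
  rw [Set.union_eq_self_of_subset_left hST] at this
  exact (this.symm ▸ Set.subset_union_left) hs

theorem card_le_choose_of_isAntichain {Q : Type*} [Fintype Q] {s : Finset (Set Q)}
    (hs : IsAntichain (· ≤ ·) (s : Set (Set Q))) :
    #s ≤ (Fintype.card Q).choose (Fintype.card Q / 2) := by
  let e := (Fintype.finsetOrderIsoSet (α := Q)).symm
  rw [← card_map e.toEquiv.toEmbedding]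
  refine IsAntichain.sperner ?_
  rw [coe_map]
  exact hs.image_relIso e

theorem nfa_sInf_isUnivLength_le_exp_logBound {α Q : Type*} [Fintype Q] [Nonempty Q] {M : NFA α Q}
    (huniv : ∃ ℓ, IsUnivLength M.accepts ℓ) {x : ℝ} (hx : exp 1 ≤ x) :
    (sInf {ℓ | IsUnivLength M.accepts ℓ} : ℕ) ≤
      exp (logBound (2 ^ Fintype.card Q) ((Fintype.card Q).choose (Fintype.card Q / 2)) x) := by
  classical
  rw [← M.toDFA_correct] at huniv ⊢
  simpa using sInf_isUnivLength_le_exp_logBound (toDFA_acceptsFrom_monotone M)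
    (fun s ↦ card_le_choose_of_isAntichain) huniv hx

end SubsetAutomaton

section Asymptotics

open Chebyshev Filter Topology

/-- The order of magnitude of the final bound on `log ℓ`, for a deterministic automaton with `m`
states. -/
noncomputable def scale (m : ℝ) : ℝ := √(m * log m)

theorem tendsto_scale : Tendsto scale atTop atTop :=
  tendsto_sqrt_atTop.comp (tendsto_id.atTop_mul_atTop₀ tendsto_log_atTop)

theorem scale_sq {m : ℝ} (hm : 1 ≤ m) : scale m ^ 2 = m * log m :=
  sq_sqrt (mul_nonneg (by positivity) (log_nonneg hm))

theorem scale_pos {m : ℝ} (hm : 1 < m) : 0 < scale m :=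
  sqrt_pos.2 (mul_pos (by positivity) (log_pos hm))

theorem scale_two_pow (n : ℕ) : scale (2 ^ n) = 2 ^ ((n : ℝ) / 2) * √(n * log 2) := by
  rw [scale, log_pow, sqrt_mul (by positivity), sqrt_eq_rpow (2 ^ n), ← rpow_natCast,
    ← rpow_mul zero_le_two, mul_one_div]

theorem tendsto_log_div_scale : Tendsto (fun m ↦ log m / scale m) atTop (𝓝 0) := by
  have hlim : Tendsto (fun m ↦ √(log m / m)) atTop (𝓝 0) := by
    simpa using (isLittleO_log_id_atTop.tendsto_div_nhds_zero).sqrt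
  refine hlim.congr' ?_
  filter_upwards [eventually_gt_atTop 1] with m hm
  rw [scale, sqrt_mul (by positivity), sqrt_div (log_pos hm).le, div_mul_eq_div_div_swap, div_sqrt]

theorem tendsto_primeCounting_sqrt_mul_log_div_scale :
    Tendsto (fun m ↦ π ⌊√m⌋₊ * log m / scale m) atTop (𝓝 0) := by
  have hlim : Tendsto (fun m ↦ 2 * (log 4 + 1) / √(log m)) atTop (𝓝 0) :=
    (tendsto_sqrt_atTop.comp tendsto_log_atTop).const_div_atTop _
  refine squeeze_zero' ?_ ?_ hlim
  · filter_upwards [eventually_gt_atTop 1] with m hm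
    exact div_nonneg (mul_nonneg (Nat.cast_nonneg _) (log_pos hm).le) (scale_pos hm).le
  filter_upwards [eventually_gt_atTop 1,
    tendsto_sqrt_atTop.eventually (eventually_primeCounting_le one_pos)] with m hm hπ
  have hlog := log_pos hm
  rw [log_sqrt (by positivity)] at hπ
  calc π ⌊√m⌋₊ * log m / scale m
      ≤ (log 4 + 1) * √m / (log m / 2) * log m / scale m := by
        have := (scale_pos hm).le
        gcongr
    _ = 2 * (log 4 + 1) / √(log m) := by
      rw [scale, sqrt_mul (by positivity)]
      have : √m ≠ 0 := by positivity
      field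

theorem tendsto_log_const_mul_scale_div_log {κ : ℝ} (hκ : 0 < κ) :
    Tendsto (fun m ↦ log (κ * scale m) / log m) atTop (𝓝 (1 / 2)) := by
  have hloglog : Tendsto (fun m ↦ log (log m) / log m) atTop (𝓝 0) :=
    isLittleO_log_id_atTop.tendsto_div_nhds_zero.comp tendsto_log_atTop
  have hlim : Tendsto (fun m ↦ log κ / log m + (1 + log (log m) / log m) / 2) atTop
      (𝓝 (0 + (1 + 0) / 2)) :=
    (tendsto_log_atTop.const_div_atTop _).add ((hloglog.const_add 1).div_const 2)
  rw [zero_add, add_zero] at hlim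
  refine hlim.congr' ?_
  filter_upwards [eventually_gt_atTop 1] with m hm
  have hlog := log_pos hm
  rw [log_mul hκ.ne' (scale_pos hm).ne', scale, log_sqrt (by positivity),
    log_mul (by positivity) hlog.ne']
  field

theorem tendsto_choose_half_div_two_pow :
    Tendsto (fun n : ℕ ↦ (n.choose (n / 2) : ℝ) / 2 ^ n) atTop (𝓝 0) := by
  have hlim : Tendsto (fun n : ℕ ↦ 1 / √((n + 1 : ℕ) : ℝ)) atTop (𝓝 0) :=
    ((tendsto_sqrt_atTop.comp tendsto_natCast_atTop_atTop).comp
      (tendsto_add_atTop_nat 1)).const_div_atTop _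
  refine squeeze_zero (fun n ↦ by positivity) (fun n ↦ ?_) hlim
  rw [div_le_div_iff₀ (by positivity) (by positivity), one_mul]
  refine (sq_le_sq₀ (by positivity) (by positivity)).1 ?_
  rw [mul_pow, sq_sqrt (Nat.cast_nonneg _), ← pow_mul, mul_comm n 2, pow_mul]
  norm_num only
  exact mod_cast choose_half_sq_mul_le n

theorem tendsto_logBound_div_scale {ι : Type*} {l : Filter ι} {m K : ι → ℝ}
    (hm : Tendsto m l atTop) (hK : Tendsto (fun i ↦ K i / m i) l (𝓝 0)) {κ : ℝ} (hκ : 0 < κ) :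
    Tendsto (fun i ↦ logBound (m i) (K i) (κ * scale (m i)) / scale (m i)) l
      (𝓝 (log 2 * κ + 1 / (4 * κ))) := by
  have hmain : Tendsto (fun i ↦ 3 * (log (m i) / scale (m i)) +
      π ⌊√(m i)⌋₊ * log (m i) / scale (m i) + log 2 * κ +
      log (κ * scale (m i)) / log (m i) * (1 + K i / m i) / (2 * κ)) l
      (𝓝 (3 * 0 + 0 + log 2 * κ + 1 / 2 * (1 + 0) / (2 * κ))) :=
    ((((tendsto_log_div_scale.comp hm).const_mul 3).add
      (tendsto_primeCounting_sqrt_mul_log_div_scale.comp hm)).add_const _).add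
      ((((tendsto_log_const_mul_scale_div_log hκ).comp hm).mul (hK.const_add 1)).div_const _)
  have hval : 3 * 0 + 0 + log 2 * κ + 1 / 2 * (1 + 0) / (2 * κ) = log 2 * κ + 1 / (4 * κ) := by
    ring
  rw [hval] at hmain
  refine hmain.congr' ?_
  filter_upwards [hm.eventually_gt_atTop 1] with i hi
  have hlog := log_pos hi
  have hscale := scale_pos hi
  have hlast : log (κ * scale (m i)) / log (m i) * (1 + K i / m i) / (2 * κ) =
      log (κ * scale (m i)) / (κ * scale (m i)) * ((m i + K i) / 2) / scale (m i) := by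
    field_simp
    rw [scale_sq hi.le]
    ring
  rw [logBound, hlast]
  field

end Asymptotics

end NFAUniversality

open Real Filter Topology NFAUniversality in
theorem nfa_min_univ_length_upper_bound_general {c : ℝ} (hc : √(log 2) < c) :
    ∃ N : ℕ, ∀ n : ℕ, N ≤ n → ∀ {α Q : Type*} [Fintype Q], Fintype.card Q = n →
      ∀ M : NFA α Q, (∃ ℓ : ℕ, IsUnivLength M.accepts ℓ) →
        ((sInf {ℓ : ℕ | IsUnivLength M.accepts ℓ} : ℕ) : ℝ) ≤
          exp (c * 2 ^ ((n : ℝ) / 2) * √(n * log 2)) := by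
  have hlog : 0 < √(log 2) := sqrt_pos.2 (log_pos one_lt_two)
  let κ : ℝ := 1 / (2 * √(log 2))
  have hκ : 0 < κ := one_div_pos.2 (mul_pos two_pos hlog)
  have hopt : log 2 * κ + 1 / (4 * κ) = √(log 2) := by
    have hsq : √(log 2) ^ 2 = log 2 := sq_sqrt (log_pos one_lt_two).le
    simp only [κ]
    field_simp
    linear_combination -4 * hsq
  have hpow : Tendsto (fun n : ℕ ↦ (2 : ℝ) ^ n) atTop atTop :=
    tendsto_pow_atTop_atTop_of_one_lt one_lt_two
  have hlim := tendsto_logBound_div_scale hpow tendsto_choose_half_div_two_pow hκ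
  rw [hopt] at hlim
  have hx := ((tendsto_scale.comp hpow).const_mul_atTop hκ).eventually_ge_atTop (exp 1)
  obtain ⟨N, hN⟩ := eventually_atTop.1
    ((hlim.eventually_le_const hc).and (hx.and (eventually_ge_atTop 1)))
  refine ⟨N, fun n hn α Q _ hQ M huniv ↦ ?_⟩
  obtain ⟨hle, hxn, hn1⟩ := hN n hn
  have : Nonempty Q := Fintype.card_pos_iff.1 (by omega)
  have hbound := nfa_sInf_isUnivLength_le_exp_logBound huniv hxn
  rw [hQ] at hbound
  refine hbound.trans (exp_le_exp.2 ?_)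
  rw [mul_assoc, ← scale_two_pow]
  exact (div_le_iff₀ (scale_pos (one_lt_pow₀ one_lt_two (by omega)))).1 hle

/-- Asymptotic upper bound on the minimal universality length of an `n`-state NFA:
for every `ε > 0`, for all sufficiently large `n`, every `n`-state NFA with a universal
length has minimal universality length at most `exp ((1 + ε) * 2^(n/2) * √(n * log 2))`. -/
theorem nfa_min_univ_length_upper_bound :
    ∀ ε : ℝ, 0 < ε → ∃ N : ℕ, ∀ n : ℕ, N ≤ n →
      ∀ (σ Q : Type) [Fintype σ] [Nonempty σ] [Fintype Q],
        Fintype.card Q = n →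
        ∀ M : NFA σ Q, (∃ ℓ : ℕ, IsUnivLength M.accepts ℓ) →
          ((sInf {ℓ : ℕ | IsUnivLength M.accepts ℓ} : ℕ) : ℝ) ≤
            Real.exp ((1 + ε) * (2 : ℝ) ^ ((n : ℝ) / 2) *
              Real.sqrt ((n : ℝ) * Real.log 2)) := by
  intro ε hε
  have hc : √(Real.log 2) < 1 + ε :=
    (Real.sqrt_lt' (by positivity)).2 (by nlinarith [Real.log_two_lt_d9])
  obtain ⟨N, hN⟩ := nfa_min_univ_length_upper_bound_general hc
  exact ⟨N, fun n hn σ Q _ _ _ hQ M huniv ↦ hN n hn hQ M huniv⟩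
end

section
/- Let M be an NFA with n states over a finite alphabet Σ. If there exists some ℓ ≥ 0 such that every word of length ℓ over Σ is accepted by M, then there exists such an ℓ with ℓ ≤ 2^(4^n). -/
/-!
Determinize the automaton to a DFA with `m = 2 ^ n` states. The set of states from which every
word of length `ℓ` is accepted is the `ℓ`-th iterate, starting at the accepting states, of a single
self-map of the power set of the states. So the orbit that decides which lengths are universal lives
in a set of size `2 ^ m`, and every set it visits is first reached in fewer than `2 ^ m` steps.
-/

theorem exists_lt_card_iterate {α : Type*} [Fintype α] (f : α → α) (x : α) {p : α → Prop}
    (h : ∃ k, p (f^[k] x)) : ∃ k < Fintype.card α, p (f^[k] x) := by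
  classical
  let k := Nat.find h
  refine ⟨k, ?_, Nat.find_spec h⟩
  have orbit_injective : Function.Injective fun i : Fin (k + 1) => f^[i] x := by
    refine .of_lt_imp_ne fun i j hij heq => ?_
    have skip_cycle : f^[k - j + i] x = f^[k] x := by
      calc f^[k - j + i] x = f^[k - j] (f^[i] x) := Function.iterate_add_apply ..
        _ = f^[k - j] (f^[j] x) := congrArg _ heq
        _ = f^[k - j + j] x := (Function.iterate_add_apply ..).symm
        _ = f^[k] x := by rw [Nat.sub_add_cancel j.is_le]
    have earlier : k - j + i < k := by lia
    exact Nat.find_min h earlier (skip_cycle ▸ Nat.find_spec h)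
  simpa only [Fintype.card_fin, Nat.add_one_le_iff] using
    Fintype.card_le_of_injective _ orbit_injective

theorem isUnivLength_zero {α : Type*} {L : Language α} : IsUnivLength L 0 ↔ [] ∈ L := by
  simp only [IsUnivLength, List.length_eq_zero_iff, forall_eq]

section DFA

variable {α S : Type*} (M : DFA α S)

/-- The universal predecessor of a set `T` of states of a DFA: the states all of whose successors
lie in `T`. It steps the set of states from which a given length is universal to the next length. -/
def univPred (T : Set S) : Set S :=
  {s | ∀ a, M.step s a ∈ T}

theorem isUnivLength_acceptsFrom_succ {s : S} {ℓ : ℕ} :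
    IsUnivLength (M.acceptsFrom s) (ℓ + 1) ↔
      ∀ a, IsUnivLength (M.acceptsFrom (M.step s a)) ℓ := by
  constructor
  · exact fun h a w hw => h (a :: w) (congrArg Nat.succ hw)
  · rintro h (_ | ⟨a, w⟩) hw
    · contradiction
    · exact h a w (Nat.succ.inj hw)

theorem isUnivLength_acceptsFrom_iff {s : S} {ℓ : ℕ} :
    IsUnivLength (M.acceptsFrom s) ℓ ↔ s ∈ (univPred M)^[ℓ] M.accept := by
  induction ℓ generalizing s with
  | zero => exact isUnivLength_zero
  | succ ℓ ih =>
    rw [isUnivLength_acceptsFrom_succ, Function.iterate_succ_apply']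
    exact forall_congr' fun _ => ih

theorem dfa_univ_length_lt [Fintype S] (h : ∃ ℓ, IsUnivLength M.accepts ℓ) :
    ∃ ℓ < 2 ^ Fintype.card S, IsUnivLength M.accepts ℓ := by
  simp only [DFA.accepts, isUnivLength_acceptsFrom_iff] at h ⊢
  simpa only [Fintype.card_set] using
    exists_lt_card_iterate (univPred M) M.accept (p := (M.start ∈ ·)) h

end DFA

theorem nfa_univ_length_le_general {α Q : Type*} [Fintype Q] (M : NFA α Q)
    (h : ∃ ℓ, IsUnivLength M.accepts ℓ) :
    ∃ ℓ < 2 ^ 2 ^ Fintype.card Q, IsUnivLength M.accepts ℓ := by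
  rw [← M.toDFA_correct] at h ⊢
  simpa only [Fintype.card_set] using dfa_univ_length_lt M.toDFA h

/-- If an NFA with `n` states has some universal length, then it has one of size at most
`2 ^ (4 ^ n)`. -/
theorem nfa_univ_length_le (σ Q : Type) [Fintype σ] [Fintype Q] (n : ℕ)
    (hQ : Fintype.card Q = n) (M : NFA σ Q)
    (h : ∃ ℓ : ℕ, IsUnivLength M.accepts ℓ) :
    ∃ ℓ : ℕ, ℓ ≤ 2 ^ (4 ^ n) ∧ IsUnivLength M.accepts ℓ := by
  obtain ⟨ℓ, hlt, hℓ⟩ := nfa_univ_length_le_general M h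
  rw [hQ] at hlt
  exact ⟨ℓ, hlt.le.trans (by gcongr <;> norm_num), hℓ⟩
end

section
/- For every ε > 0 there exists N such that for all n ≥ N there exists an NFA with exactly n states over an alphabet with 15 letters such that the NFA has a universal length and its minimal universality length is at least exp((1 − ε)·2^(n/11)). -/
/-!
An NFA with `O(k)` states can recognise the words that are not prefixes of any of `2 ^ k` infinite
words. The `p`-th of these is the log of a `k`-bit counter that is decremented from `p` to `0` and
then reloaded with `p`, forever; besides the counter, each digit carries the corresponding bit of
`p` and the incoming borrow, so that every letter is determined by its predecessor and by the
letter one block earlier. The automaton guesses a place where one of these two checks fails. A word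
that passes all checks is the log of some `p < 2 ^ k`, and it is accepted only if its last letter
announces a reload, which in that log happens every `(p + 1) * (k + 1)` letters. Hence `ℓ + 1` is
universal iff `ℓ` is a positive common multiple of these periods, and `lcm (1, …, 2 ^ k)` is
exponential in `2 ^ k`. A block position costs six states, so `2 ^ k` is `2 ^ (n / 6)` up to a
constant factor, which outgrows every multiple of `2 ^ (n / b)` with `6 < b`.
-/

open Filter

namespace UnivLength

section Arithmetic

theorem two_pow_succ_dvd_iff (x t : ℕ) : 2 ^ (t + 1) ∣ x ↔ 2 ^ t ∣ x ∧ x.testBit t = false := by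
  rw [Nat.testBit_eq_decide_div_mod_eq, Nat.dvd_iff_mod_eq_zero, Nat.dvd_iff_mod_eq_zero, pow_succ,
    Nat.mod_mul]
  rcases Nat.mod_two_eq_zero_or_one (x / 2 ^ t) with h | h <;> simp [h]

theorem testBit_sub_one {x : ℕ} (hx : x ≠ 0) (t : ℕ) :
    (x - 1).testBit t = (x.testBit t ^^ decide (2 ^ t ∣ x)) := by
  induction t generalizing x with
  | zero => grind
  | succ t ih =>
    have half_dvd : 2 ^ (t + 1) ∣ x ↔ x % 2 = 0 ∧ 2 ^ t ∣ x / 2 := by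
      rw [pow_succ', Nat.dvd_iff_mod_eq_zero, Nat.mod_mul, Nat.dvd_iff_mod_eq_zero]
      lia
    rw [Nat.testBit_succ, Nat.testBit_succ]
    rcases Nat.mod_two_eq_zero_or_one x with even | odd
    · rw [show (x - 1) / 2 = x / 2 - 1 by lia, ih (by lia)]
      simp [half_dvd, even]
    · rw [show (x - 1) / 2 = x / 2 by lia]
      simp [half_dvd, odd]

theorem lcmUpto_dvd_iff {n m : ℕ} : n.lcmUpto ∣ m ↔ ∀ p < n, p + 1 ∣ m := by
  simp only [Nat.lcmUpto, Finset.lcm_dvd_iff, Finset.mem_Icc, id]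
  refine ⟨fun h p hp => h _ ⟨p.succ_pos, hp⟩, fun h d hd => ?_⟩
  simpa [Nat.sub_add_cancel hd.1] using h (d - 1) (by lia)

theorem lcmUpto_mul_dvd_iff {n m c : ℕ} (hn : 0 < n) :
    n.lcmUpto * c ∣ m ↔ ∀ p < n, (p + 1) * c ∣ m := by
  rcases c.eq_zero_or_pos with rfl | hc
  · simpa using ⟨fun h _ _ => h, fun h => h 0 hn⟩
  constructor
  · exact fun h p hp => (Nat.mul_dvd_mul_right (lcmUpto_dvd_iff.1 dvd_rfl p hp) c).trans h
  · intro h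
    obtain ⟨m, rfl⟩ : c ∣ m := dvd_of_mul_left_dvd (h 0 hn)
    simp only [mul_comm c m, Nat.mul_dvd_mul_iff_right hc] at h ⊢
    exact lcmUpto_dvd_iff.2 h

theorem exp_le_lcmUpto (m : ℕ) : Real.exp m ≤ (4 * m).lcmUpto := by
  have bernoulli : (m * 4 + 1 : ℝ) ≤ 5 ^ m := by
    have := one_add_mul_le_pow (a := (4 : ℝ)) (by norm_num) m
    norm_num at this ⊢
    linarith
  have chebyshev : (2 : ℝ) ^ (4 * m) ≤ (4 * m + 1) * (4 * m).lcmUpto :=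
    mod_cast Chebyshev.two_pow_le_mul_lcmUpto (4 * m)
  have key : (4 * m + 1) * Real.exp m ≤ (4 * m + 1) * (4 * m).lcmUpto := calc
    (4 * m + 1) * Real.exp m ≤ 5 ^ m * Real.exp 1 ^ m := by
      rw [← Real.exp_one_pow]
      gcongr
      linarith
    _ = (5 * Real.exp 1) ^ m := (mul_pow ..).symm
    _ ≤ 16 ^ m := by
      gcongr
      linarith [Real.exp_one_lt_d9]
    _ = 2 ^ (4 * m) := by rw [pow_mul]; norm_num
    _ ≤ _ := chebyshev
  exact le_of_mul_le_mul_left key (by positivity)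

theorem eventually_mul_rpow_div_le {a b c : ℝ} (ha : 1 < a) (hc : 0 < c) (hcb : c < b) (C d : ℝ) :
    ∀ᶠ x : ℝ in atTop, C * a ^ (x / b) ≤ a ^ ((x - d) / c) := by
  have slope : 0 < 1 / c - 1 / b := sub_pos.2 (one_div_lt_one_div_of_lt hc hcb)
  have gap : Tendsto (fun x : ℝ => (1 / c - 1 / b) * x - d / c) atTop atTop :=
    tendsto_atTop_add_const_right _ _ (tendsto_id.const_mul_atTop slope)
  have growth := (tendsto_rpow_atTop_of_base_gt_one a ha).comp gap
  filter_upwards [growth.eventually_ge_atTop C] with x hx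
  calc C * a ^ (x / b) ≤ a ^ ((1 / c - 1 / b) * x - d / c) * a ^ (x / b) := by gcongr; exact hx
    _ = a ^ ((x - d) / c) := by rw [← Real.rpow_add (by linarith)]; ring_nf

end Arithmetic

section Words

variable {α β σ : Type*}

/-- The automaton reading `a` as `M` reads `f a`. -/
def relabel (M : NFA β σ) (f : α → β) : NFA α σ where
  step q a := M.step q (f a)
  start := M.start
  accept := M.accept

theorem mem_accepts_relabel {M : NFA β σ} {f : α → β} {u : List α} :
    u ∈ (relabel M f).accepts ↔ u.map f ∈ M.accepts := by
  have eval_eq : M.eval (u.map f) = (relabel M f).eval u := List.foldl_map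
  change (∃ q ∈ _, q ∈ (relabel M f).eval u) ↔ ∃ q ∈ _, q ∈ M.eval (u.map f)
  rw [eval_eq]
  rfl

theorem isUnivLength_relabel {M : NFA β σ} {f : α → β} (hf : f.Surjective) {ℓ : ℕ} :
    IsUnivLength (relabel M f).accepts ℓ ↔ IsUnivLength M.accepts ℓ := by
  constructor
  · rintro h v rfl
    obtain ⟨u, rfl⟩ := List.map_surjective_iff.2 hf v
    exact mem_accepts_relabel.1 (h u (List.length_map f).symm)
  · rintro h u rfl
    exact mem_accepts_relabel.2 (h _ (List.length_map f))

/-- The first `i` letters of an infinite word. -/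
def firstLetters (w : ℕ → α) (i : ℕ) : List α := (List.range i).map w

theorem isUnivLength_iff_firstLetters [Inhabited α] {L : Language α} {ℓ : ℕ} :
    IsUnivLength L ℓ ↔ ∀ w : ℕ → α, firstLetters w ℓ ∈ L := by
  refine ⟨fun h w => h _ (by simp [firstLetters]), ?_⟩
  rintro h v rfl
  have eq_v : firstLetters (fun i => v.getD i default) v.length = v :=
    List.ext_getElem (by simp [firstLetters]) fun i _ hi => by simp [firstLetters, hi]
  exact eq_v ▸ h _

theorem mem_eval_firstLetters_succ {M : NFA α σ} {w : ℕ → α} {i : ℕ} {q : σ} :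
    q ∈ M.eval (firstLetters w (i + 1)) ↔
      ∃ q' ∈ M.eval (firstLetters w i), q ∈ M.step q' (w i) := by
  rw [firstLetters, List.range_succ, List.map_append, List.map_singleton,
    NFA.eval_append_singleton, NFA.mem_stepSet]
  rfl

end Words

/-- The letters of a counter log. A block is a delimiter, telling whether the counter has just been
reloaded, followed by the binary digits of the counter, least significant first. A digit consists of
the bit of the counter, the bit of the reload value and the borrow that the next decrement brings to
this place. Right after a reload the two bits agree and the first is replaced by `none`, so that the
reload is visible at every digit of its block. -/
inductive Letter
  | delim (reload : Bool)
  | digit (bit : Option Bool) (reloadBit borrow : Bool)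

/-- What the automaton remembers of a letter for a whole block: `none` for a delimiter, and for a
digit the bit of the decremented counter together with the bit of the reload value. -/
abbrev Memo := Option (Bool × Bool)

/-- The memo that the letter leaves for the letter one block later. -/
def Letter.memo : Letter → Memo
  | .delim _ => none
  | .digit o p b => some (o.getD p ^^ b, p)

/-- Consistency of a letter with the memo of the letter one block earlier. -/
def Memo.Allows : Memo → Letter → Prop
  | none, .delim _ => True
  | some (c, p), .digit o p' _ => p' = p ∧ (o = none ∨ o = some c)
  | _, _ => False

namespace Letter

/-- The predicate of being a delimiter. -/
def IsDelim : Letter → Prop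
  | delim _ => True
  | digit .. => False

/-- The predicate of belonging to a block that starts with a reload. -/
def IsReload : Letter → Prop
  | delim s => s = true
  | digit o _ _ => o = none

/-- The bit of the reload value shown by a digit; a delimiter gets the junk value `false`. -/
def reloadBit : Letter → Bool
  | delim _ => false
  | digit _ p _ => p

/-- Consistency of a letter with its successor: the reload flag is constant within a block, the
borrow propagates from place to place, and a borrow leaving the last place causes a reload. -/
def Adjacent : Letter → Letter → Prop
  | delim _, delim _ => False
  | delim s, digit o _ b => o.isNone = s ∧ b = true
  | digit o p b, delim s => s = (b && !o.getD p)
  | digit o p b, digit o' _ b' => o'.isNone = o.isNone ∧ b' = (b && !o.getD p)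

instance : Inhabited Letter := ⟨delim true⟩

/-- Letters as tuples, for counting them. -/
def equivSum : Letter ≃ Bool ⊕ Option Bool × Bool × Bool where
  toFun
    | delim s => .inl s
    | digit o p b => .inr (o, p, b)
  invFun
    | .inl s => delim s
    | .inr (o, p, b) => digit o p b
  left_inv a := by cases a <;> rfl
  right_inv x := by cases x <;> rfl

instance : Fintype Letter := .ofEquiv _ equivSum.symm

theorem card_eq : Fintype.card Letter = 14 := by
  simp [Fintype.card_congr equivSum]

theorem exists_surjective {α : Type*} (hα : 14 ≤ ENat.card α) : ∃ f : α → Letter, f.Surjective := by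
  obtain ⟨s, hs⟩ := Cardinal.exists_finset_eq_card (Cardinal.ofNat_le_toENat.1 hα)
  have e : Letter ≃ s := Fintype.equivOfCardEq (by simpa [card_eq] using hs)
  let ι : Letter ↪ α := e.toEmbedding.trans (.subtype _)
  exact ⟨Function.invFun ι, Function.invFun_surjective ι.injective⟩

theorem Adjacent.unique_of_memo {a x y : Letter} {t : Memo} (hx : a.Adjacent x) (htx : t.Allows x)
    (hy : a.Adjacent y) (hty : t.Allows y) : x = y := by
  rcases a with s | ⟨o, p, b⟩ <;> rcases x with sx | ⟨_ | ox, px, bx⟩ <;>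
    rcases y with sy | ⟨_ | oy, py, bY⟩ <;> rcases t with _ | ⟨c, r⟩ <;>
    simp_all [Adjacent, Memo.Allows]

theorem Adjacent.unique_of_isReload {a x y : Letter} (ha : a.IsReload) (hx : a.Adjacent x)
    (hdx : ¬x.IsDelim) (hy : a.Adjacent y) (hdy : ¬y.IsDelim) (hbit : x.reloadBit = y.reloadBit) :
    x = y := by
  rcases a with s | ⟨o, p, b⟩ <;> rcases x with sx | ⟨ox, px, bx⟩ <;>
    rcases y with sy | ⟨oy, py, bY⟩ <;>
    simp_all [Adjacent, IsDelim, IsReload, reloadBit]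

end Letter

section CounterLog

/-- The value in block `q` of a counter decremented from `p` to `0` and then reloaded. -/
def counter (p q : ℕ) : ℕ := p - q % (p + 1)

theorem counter_le (p q : ℕ) : counter p q ≤ p := Nat.sub_le _ _

theorem counter_of_dvd {p q : ℕ} (h : p + 1 ∣ q) : counter p q = p := by
  rw [counter, Nat.mod_eq_zero_of_dvd h, Nat.sub_zero]

theorem counter_eq_zero_iff {p q : ℕ} : counter p q = 0 ↔ p + 1 ∣ q + 1 := by
  have := Nat.mod_lt q p.succ_pos
  rw [counter, Nat.dvd_iff_mod_eq_zero, Nat.add_mod_eq_ite]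
  rcases p.eq_zero_or_pos with rfl | hp
  · simp [Nat.mod_one]
  · rw [Nat.mod_eq_of_lt (by lia : 1 < p + 1)]
    split_ifs <;> lia

theorem counter_succ {p q : ℕ} (h : counter p q ≠ 0) : counter p (q + 1) = counter p q - 1 := by
  have hlt : q % (p + 1) + 1 < p + 1 := by
    rw [counter] at h
    lia
  rw [counter, counter, ← Nat.mod_add_mod q (p + 1) 1, Nat.mod_eq_of_lt hlt, Nat.sub_sub]

/-- The letter at place `j` of block `q` in the log with reload value `p`. -/
def blockLetter (p q : ℕ) : ℕ → Letter
  | 0 => .delim (decide (p + 1 ∣ q))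
  | j + 1 => .digit (if p + 1 ∣ q then none else some ((counter p q).testBit j)) (p.testBit j)
      (decide (2 ^ j ∣ counter p q))

theorem getD_blockLetter_bit (p q j : ℕ) :
    (if p + 1 ∣ q then none else some ((counter p q).testBit j)).getD (p.testBit j) =
      (counter p q).testBit j := by
  split_ifs with h
  · rw [counter_of_dvd h, Option.getD_none]
  · rfl

theorem adjacent_blockLetter_succ (p q j : ℕ) :
    (blockLetter p q j).Adjacent (blockLetter p q (j + 1)) := by
  cases j with
  | zero =>
    refine ⟨?_, by simp⟩
    split_ifs with h <;> simp [h]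
  | succ j =>
    refine ⟨by split_ifs <;> rfl, ?_⟩
    rw [getD_blockLetter_bit]
    simp [two_pow_succ_dvd_iff]

theorem adjacent_blockLetter_next_block {k p : ℕ} (hk : k ≠ 0) (hp : p < 2 ^ k) (q : ℕ) :
    (blockLetter p q k).Adjacent (blockLetter p (q + 1) 0) := by
  obtain ⟨j, rfl⟩ := Nat.exists_eq_succ_of_ne_zero hk
  have no_bits_above : 2 ^ (j + 1) ∣ counter p q ↔ p + 1 ∣ q + 1 := by
    rw [← counter_eq_zero_iff]
    exact ⟨fun h => Nat.eq_zero_of_dvd_of_lt h ((counter_le p q).trans_lt hp),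
      fun h => h ▸ dvd_zero _⟩
  simp only [blockLetter, Letter.Adjacent]
  rw [getD_blockLetter_bit]
  simp [← no_bits_above, two_pow_succ_dvd_iff]

theorem memo_allows_blockLetter (p q j : ℕ) :
    (blockLetter p q j).memo.Allows (blockLetter p (q + 1) j) := by
  cases j with
  | zero => trivial
  | succ j =>
    refine ⟨rfl, ?_⟩
    rw [getD_blockLetter_bit]
    split_ifs with reload
    · exact .inl rfl
    · have hpos : counter p q ≠ 0 := mt counter_eq_zero_iff.1 reload
      rw [counter_succ hpos, testBit_sub_one hpos]
      exact .inr rfl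

/-- The infinite log of the `k`-digit counter with reload value `p`. -/
def counterLog (k p i : ℕ) : Letter := blockLetter p (i / (k + 1)) (i % (k + 1))

theorem counterLog_mul_add {k j : ℕ} (hj : j ≤ k) (p q : ℕ) :
    counterLog k p (q * (k + 1) + j) = blockLetter p q j := by
  have hj' : j < k + 1 := Nat.lt_succ_of_le hj
  rw [counterLog, Nat.mul_add_mod', Nat.mod_eq_of_lt hj', Nat.add_comm,
    Nat.add_mul_div_right _ _ k.succ_pos, Nat.div_eq_of_lt hj', Nat.zero_add]

theorem counterLog_of_le {k j : ℕ} (hj : j ≤ k) (p : ℕ) :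
    counterLog k p j = blockLetter p 0 j := by
  simpa using counterLog_mul_add hj p 0

theorem exists_eq_mul_add (k i : ℕ) : ∃ q j, j ≤ k ∧ i = q * (k + 1) + j :=
  ⟨i / (k + 1), i % (k + 1), Nat.le_of_lt_succ (Nat.mod_lt _ k.succ_pos),
    (Nat.div_add_mod' i (k + 1)).symm⟩

theorem counterLog_eq_delim_true_iff {k p i : ℕ} :
    counterLog k p i = .delim true ↔ (p + 1) * (k + 1) ∣ i := by
  obtain ⟨q, j, hj, rfl⟩ := exists_eq_mul_add k i
  rw [counterLog_mul_add hj]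
  cases j with
  | zero => simp [blockLetter, Nat.mul_dvd_mul_iff_right]
  | succ j =>
    simp only [blockLetter, reduceCtorEq, false_iff]
    intro h
    have : k + 1 ∣ j + 1 := (Nat.dvd_add_right (Dvd.intro_left q rfl)).1 (dvd_of_mul_left_dvd h)
    exact absurd (Nat.le_of_dvd j.succ_pos this) (by lia)

/-- The first `ℓ` letters of `w` pass all local checks of a log with `k`-digit blocks. -/
structure IsLog (k : ℕ) (w : ℕ → Letter) (ℓ : ℕ) : Prop where
  zero : 0 < ℓ → w 0 = .delim true
  not_isDelim : ∀ i < k, i + 1 < ℓ → ¬(w (i + 1)).IsDelim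
  adjacent : ∀ i, i + 1 < ℓ → (w i).Adjacent (w (i + 1))
  allows : ∀ i, i + (k + 1) < ℓ → (w i).memo.Allows (w (i + (k + 1)))

theorem IsLog.mono {k ℓ ℓ' : ℕ} {w : ℕ → Letter} (h : IsLog k w ℓ') (hℓ : ℓ ≤ ℓ') :
    IsLog k w ℓ where
  zero h0 := h.zero (by lia)
  not_isDelim i hik hi := h.not_isDelim i hik (by lia)
  adjacent i hi := h.adjacent i (by lia)
  allows i hi := h.allows i (by lia)

theorem isLog_counterLog {k p : ℕ} (hk : k ≠ 0) (hp : p < 2 ^ k) (ℓ : ℕ) :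
    IsLog k (counterLog k p) ℓ where
  zero _ := counterLog_eq_delim_true_iff.2 (dvd_zero _)
  not_isDelim i hi _ := by
    rw [counterLog_of_le hi]
    exact id
  adjacent i _ := by
    obtain ⟨q, j, hj, rfl⟩ := exists_eq_mul_add k i
    rw [counterLog_mul_add hj]
    rcases hj.eq_or_lt with rfl | hlt
    · rw [show q * (j + 1) + j + 1 = (q + 1) * (j + 1) + 0 by ring,
        counterLog_mul_add (Nat.zero_le _)]
      exact adjacent_blockLetter_next_block hk hp q
    · rw [add_assoc, counterLog_mul_add hlt]
      exact adjacent_blockLetter_succ p q j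
  allows i _ := by
    obtain ⟨q, j, hj, rfl⟩ := exists_eq_mul_add k i
    rw [show q * (k + 1) + j + (k + 1) = (q + 1) * (k + 1) + j by ring, counterLog_mul_add hj,
      counterLog_mul_add hj]
    exact memo_allows_blockLetter p q j

theorem isReload_counterLog {k i : ℕ} (hi : i ≤ k) (p : ℕ) : (counterLog k p i).IsReload := by
  rw [counterLog_of_le hi]
  cases i <;> simp [blockLetter, Letter.IsReload]

/-- The first block shows the bits of the reload value, and the checks then determine each
letter in turn. -/
theorem IsLog.exists_eq_counterLog {k ℓ : ℕ} {w : ℕ → Letter} (hk : k ≠ 0) (h : IsLog k w ℓ) :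
    ∃ p < 2 ^ k, ∀ i < ℓ, w i = counterLog k p i := by
  set p := Nat.ofBits fun i : Fin k => (w (i + 1)).reloadBit
  have hp : p < 2 ^ k := Nat.ofBits_lt_two_pow _
  refine ⟨p, hp, fun i => ?_⟩
  induction i using Nat.strong_induction_on with
  | _ i ih =>
  intro hi
  have hlog := isLog_counterLog hk hp (i + 1)
  rcases i with _ | i
  · rw [h.zero hi, hlog.zero Nat.one_pos]
  have hadj := h.adjacent i hi
  rw [ih i (by lia) (by lia)] at hadj
  rcases lt_or_ge i k with first_block | later_block
  · have hbit : (w (i + 1)).reloadBit = (counterLog k p (i + 1)).reloadBit := by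
      rw [counterLog_of_le first_block]
      exact (Nat.testBit_ofBits_lt (fun i : Fin k => (w (i + 1)).reloadBit) i first_block).symm
    exact hadj.unique_of_isReload (isReload_counterLog first_block.le p)
      (h.not_isDelim i first_block hi) (hlog.adjacent i (by lia))
      (hlog.not_isDelim i first_block (by lia)) hbit
  · obtain ⟨m, rfl⟩ := Nat.exists_eq_add_of_le' later_block
    have hmemo := h.allows m hi
    rw [ih m (by lia) (by lia)] at hmemo
    exact hadj.unique_of_memo hmemo (hlog.adjacent (m + k) (by lia)) (hlog.allows m (by lia))

end CounterLog

/-- The states of the automaton with `k`-digit blocks. Before guessing a check it is in `idle`; the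
state `last a` remembers the previous letter, `line t j` a memo taken `j + 1` letters ago, and
`head j` that `j` letters of the word have been read. In `err` a check has failed, in `fin` the
letter just read announces a reload, and the `r` states `pad j` are unreachable. -/
inductive State (k r : ℕ)
  | idle
  | err
  | fin
  | last (a : Letter)
  | head (j : Fin (k + 1))
  | line (t : Memo) (j : Fin (k + 1))
  | pad (j : Fin r)

section Automaton

variable {k r : ℕ}

/-- States as tuples, for counting them. -/
def State.equivSum (k r : ℕ) :
    State k r ≃ Fin 3 ⊕ Letter ⊕ Fin (k + 1) ⊕ (Memo × Fin (k + 1)) ⊕ Fin r where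
  toFun
    | idle => .inl 0
    | err => .inl 1
    | fin => .inl 2
    | last a => .inr (.inl a)
    | head j => .inr (.inr (.inl j))
    | line t j => .inr (.inr (.inr (.inl (t, j))))
    | pad j => .inr (.inr (.inr (.inr j)))
  invFun
    | .inl 0 => idle
    | .inl 1 => err
    | .inl 2 => fin
    | .inr (.inl a) => last a
    | .inr (.inr (.inl j)) => head j
    | .inr (.inr (.inr (.inl (t, j)))) => line t j
    | .inr (.inr (.inr (.inr j))) => pad j
  left_inv q := by cases q <;> rfl
  right_inv x := by
    rcases x with x | a | j | ⟨t, j⟩ | j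
    · fin_cases x <;> rfl
    all_goals rfl

instance : Fintype (State k r) := .ofEquiv _ (State.equivSum k r).symm

theorem State.card_eq (k r : ℕ) : Fintype.card (State k r) = 6 * k + 23 + r := by
  simp only [Fintype.card_congr (State.equivSum k r), Fintype.card_sum, Fintype.card_prod,
    Fintype.card_fin, Fintype.card_option, Fintype.card_bool, Letter.card_eq]
  ring

/-- The transitions of the automaton. -/
inductive Step : State k r → Letter → State k r → Prop
  | idle_idle (a) : Step .idle a .idle
  | idle_last (a) : Step .idle a (.last a)
  | idle_line (a) : Step .idle a (.line a.memo 0)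
  | last_fin (a) : Step (.last a) (.delim true) .fin
  | last_err {a b} (h : ¬a.Adjacent b) : Step (.last a) b .err
  | line_line (t a) (j : Fin k) : Step (.line t j.castSucc) a (.line t j.succ)
  | line_err {t a} (h : ¬t.Allows a) : Step (.line t (Fin.last k)) a .err
  | head_head (a) (j : Fin k) : Step (.head j.castSucc) a (.head j.succ)
  | head_err_zero {a} (h : a ≠ .delim true) : Step (.head 0) a .err
  | head_err_succ {a} (j : Fin k) (h : a.IsDelim) : Step (.head j.succ) a .err
  | err_err (a) : Step .err a .err

/-- The automaton accepting a word iff it is not a counter log or ends in a reload. -/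
def counterNFA (k r : ℕ) : NFA Letter (State k r) where
  step q a := {q' | Step q a q'}
  start := {.idle, .head 0}
  accept := {.err, .fin}

/-- Necessary condition for a state to be reachable by the first `i` letters of `w`. -/
def State.Reflects (w : ℕ → Letter) (i : ℕ) : State k r → Prop
  | idle => True
  | err => ¬IsLog k w i
  | fin => 1 < i ∧ w (i - 1) = .delim true
  | last a => ∃ m, i = m + 1 ∧ w m = a
  | head j => i = j
  | line t j => ∃ m, i = m + 1 + j ∧ (w m).memo = t
  | pad _ => False

variable {w : ℕ → Letter}

theorem Step.reflects {q q' : State k r} {i : ℕ} (hs : Step q (w i) q') (hq : q.Reflects w i) :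
    q'.Reflects w (i + 1) := by
  generalize hx : w i = x at hs
  cases hs with
  | idle_idle => trivial
  | idle_last => exact ⟨i, rfl, hx⟩
  | idle_line => exact ⟨i, rfl, by rw [hx]⟩
  | last_fin =>
    obtain ⟨m, rfl, -⟩ := hq
    exact ⟨by lia, hx⟩
  | last_err h =>
    obtain ⟨m, rfl, rfl⟩ := hq
    exact fun hlog => h (hx ▸ hlog.adjacent m (Nat.lt_succ_self _))
  | line_line t _ j =>
    obtain ⟨m, rfl, ht⟩ := hq
    exact ⟨m, by simp [add_assoc], ht⟩
  | line_err h =>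
    obtain ⟨m, rfl, rfl⟩ := hq
    rw [Fin.val_last, add_assoc, add_comm 1 k] at hx
    exact fun hlog => h (hx ▸ hlog.allows m (by rw [Fin.val_last]; lia))
  | head_head _ j =>
    simp only [State.Reflects, Fin.val_castSucc, Fin.val_succ] at hq ⊢
    rw [hq]
  | head_err_zero h =>
    obtain rfl : i = 0 := hq
    exact fun hlog => h (hx ▸ hlog.zero Nat.one_pos)
  | head_err_succ j h =>
    obtain rfl : i = j + 1 := hq
    exact fun hlog => hlog.not_isDelim j j.isLt (Nat.lt_succ_self _) (hx ▸ h)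
  | err_err => exact fun hlog => hq (hlog.mono i.le_succ)

theorem reflects_of_mem_eval {i : ℕ} {q : State k r}
    (hq : q ∈ (counterNFA k r).eval (firstLetters w i)) : q.Reflects w i := by
  induction i generalizing q with
  | zero =>
    rcases hq with rfl | rfl
    · trivial
    · rfl
  | succ i ih =>
    obtain ⟨q', hq', hs⟩ := mem_eval_firstLetters_succ.1 hq
    exact hs.reflects (ih hq')

theorem Step.mem_eval {q q' : State k r} {i : ℕ} (hs : Step q (w i) q')
    (hq : q ∈ (counterNFA k r).eval (firstLetters w i)) :
    q' ∈ (counterNFA k r).eval (firstLetters w (i + 1)) :=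
  mem_eval_firstLetters_succ.2 ⟨q, hq, hs⟩

theorem idle_mem_eval (i : ℕ) : .idle ∈ (counterNFA k r).eval (firstLetters w i) := by
  induction i with
  | zero => exact .inl rfl
  | succ i ih => exact (Step.idle_idle _).mem_eval ih

theorem last_mem_eval (i : ℕ) :
    .last (w i) ∈ (counterNFA k r).eval (firstLetters w (i + 1)) :=
  (Step.idle_last _).mem_eval (idle_mem_eval i)

theorem line_mem_eval (i : ℕ) (j : Fin (k + 1)) :
    .line (w i).memo j ∈ (counterNFA k r).eval (firstLetters w (i + 1 + j)) := by
  induction j using Fin.induction with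
  | zero => exact (Step.idle_line _).mem_eval (idle_mem_eval i)
  | succ j ih => exact (Step.line_line _ _ j).mem_eval ih

theorem head_mem_eval (j : Fin (k + 1)) :
    .head j ∈ (counterNFA k r).eval (firstLetters w j) := by
  induction j using Fin.induction with
  | zero => exact .inr rfl
  | succ j ih => exact (Step.head_head _ j).mem_eval ih

theorem err_mem_eval_mono {i ℓ : ℕ} (hi : i ≤ ℓ)
    (h : .err ∈ (counterNFA k r).eval (firstLetters w i)) :
    .err ∈ (counterNFA k r).eval (firstLetters w ℓ) := by
  induction ℓ, hi using Nat.le_induction with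
  | base => exact h
  | succ ℓ _ ih => exact (Step.err_err _).mem_eval ih

theorem err_mem_eval_iff {ℓ : ℕ} :
    .err ∈ (counterNFA k r).eval (firstLetters w ℓ) ↔ ¬IsLog k w ℓ := by
  refine ⟨reflects_of_mem_eval, not_imp_comm.1 fun herr => ?_⟩
  have no_err {i : ℕ} (hi : i < ℓ) {q : State k r}
      (hq : q ∈ (counterNFA k r).eval (firstLetters w i)) : ¬Step q (w i) .err :=
    fun hs => herr (err_mem_eval_mono hi (hs.mem_eval hq))
  constructor
  · exact fun h0 => not_not.1 fun h => no_err h0 (head_mem_eval 0) (.head_err_zero h)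
  · exact fun i hik hi h => no_err hi (head_mem_eval (Fin.succ ⟨i, hik⟩)) (.head_err_succ _ h)
  · exact fun i hi => not_not.1 fun h => no_err hi (last_mem_eval i) (.last_err h)
  · intro i hi
    by_contra h
    have hline := line_mem_eval (r := r) (w := w) i (Fin.last k)
    rw [Fin.val_last, add_assoc, add_comm 1 k] at hline
    exact no_err hi hline (.line_err h)

theorem fin_mem_eval_iff {ℓ : ℕ} :
    .fin ∈ (counterNFA k r).eval (firstLetters w ℓ) ↔ 1 < ℓ ∧ w (ℓ - 1) = .delim true := by
  refine ⟨reflects_of_mem_eval, ?_⟩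
  rintro ⟨hℓ, hlast⟩
  obtain ⟨m, rfl⟩ := Nat.exists_eq_add_of_le' hℓ
  refine Step.mem_eval ?_ (last_mem_eval m)
  rw [show w (m + 1) = .delim true from hlast]
  exact .last_fin _

theorem firstLetters_mem_accepts_iff {ℓ : ℕ} :
    firstLetters w ℓ ∈ (counterNFA k r).accepts ↔
      (IsLog k w ℓ → 1 < ℓ ∧ w (ℓ - 1) = .delim true) := by
  rw [imp_iff_not_or, ← err_mem_eval_iff (r := r), ← fin_mem_eval_iff (k := k) (r := r)]
  change (∃ q ∈ ({.err, .fin} : Set (State k r)), _) ↔ _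
  simp only [Set.mem_insert_iff, Set.mem_singleton_iff, exists_eq_or_imp, exists_eq_left]

theorem isUnivLength_counterNFA_iff (hk : k ≠ 0) {ℓ : ℕ} :
    IsUnivLength (counterNFA k r).accepts ℓ ↔ 1 < ℓ ∧ (2 ^ k).lcmUpto * (k + 1) ∣ ℓ - 1 := by
  simp only [isUnivLength_iff_firstLetters, firstLetters_mem_accepts_iff,
    lcmUpto_mul_dvd_iff (Nat.two_pow_pos k)]
  constructor
  · intro h
    have on_log {p : ℕ} (hp : p < 2 ^ k) := h (counterLog k p) (isLog_counterLog hk hp ℓ)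
    exact ⟨(on_log (Nat.two_pow_pos k)).1, fun p hp => counterLog_eq_delim_true_iff.1 (on_log hp).2⟩
  · rintro ⟨hℓ, hdvd⟩ w hw
    obtain ⟨p, hp, hlog⟩ := hw.exists_eq_counterLog hk
    exact ⟨hℓ, (hlog _ (by lia)).trans (counterLog_eq_delim_true_iff.2 (hdvd p hp))⟩

theorem isLeast_isUnivLength_counterNFA (hk : k ≠ 0) (r : ℕ) :
    IsLeast {ℓ | IsUnivLength (counterNFA k r).accepts ℓ} ((2 ^ k).lcmUpto * (k + 1) + 1) := by
  have hpos : 0 < (2 ^ k).lcmUpto * (k + 1) := Nat.mul_pos (Nat.lcmUpto_pos _) k.succ_pos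
  refine ⟨(isUnivLength_counterNFA_iff hk).2 ⟨by lia, dvd_rfl⟩, fun ℓ hℓ => ?_⟩
  obtain ⟨one_lt, hdvd⟩ := (isUnivLength_counterNFA_iff hk).1 hℓ
  have := Nat.le_of_dvd (by lia) hdvd
  lia

end Automaton

theorem exists_nfa_exp_le_sInf_isUnivLength {α : Type*} (hα : 14 ≤ ENat.card α) {n : ℕ}
    (hn : 35 ≤ n) :
    ∃ (Q : Type) (inst : Fintype Q), @Fintype.card Q inst = n ∧
      ∃ M : NFA α Q,
        (∃ ℓ : ℕ, IsUnivLength M.accepts ℓ) ∧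
        Real.exp ((2 : ℝ) ^ (((n : ℝ) - 40) / 6)) ≤
          ((sInf {ℓ : ℕ | IsUnivLength M.accepts ℓ} : ℕ) : ℝ) := by
  obtain ⟨k, r, hcard, hr⟩ : ∃ k r, 6 * (k + 2) + 23 + r = n ∧ r < 6 :=
    ⟨(n - 35) / 6, (n - 35) % 6, by lia, by lia⟩
  obtain ⟨f, hf⟩ := Letter.exists_surjective hα
  have hleast := isLeast_isUnivLength_counterNFA (k + 1).succ_ne_zero r
  refine ⟨State (k + 2) r, inferInstance, by rw [State.card_eq, hcard],
    relabel (counterNFA (k + 2) r) f, ?_⟩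
  simp only [isUnivLength_relabel hf]
  refine ⟨⟨_, hleast.1⟩, ?_⟩
  have exponent_le : ((n : ℝ) - 40) / 6 ≤ k := by
    have : (n : ℝ) ≤ 6 * k + 40 := mod_cast (by lia : n ≤ 6 * k + 40)
    linarith
  have lcm_le : (4 * 2 ^ k).lcmUpto ≤ (2 ^ (k + 2)).lcmUpto * (k + 2 + 1) + 1 := by
    rw [pow_add, mul_comm (2 ^ k)]
    exact (Nat.le_mul_of_pos_right _ (k + 2).succ_pos).trans (Nat.le_succ _)
  rw [hleast.csInf_eq]
  calc Real.exp (2 ^ (((n : ℝ) - 40) / 6)) ≤ Real.exp ((2 ^ k : ℕ) : ℝ) := by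
        push_cast
        rw [← Real.rpow_natCast]
        gcongr
        norm_num
    _ ≤ ((4 * 2 ^ k).lcmUpto : ℝ) := exp_le_lcmUpto _
    _ ≤ _ := mod_cast lcm_le

end UnivLength

theorem nfa_min_univ_length_lower_bound_general {α : Type*} (hα : 14 ≤ ENat.card α) {b : ℝ}
    (hb : 6 < b) (C : ℝ) :
    ∃ N : ℕ, ∀ n : ℕ, N ≤ n →
      ∃ (Q : Type) (inst : Fintype Q), @Fintype.card Q inst = n ∧
        ∃ M : NFA α Q,
          (∃ ℓ : ℕ, IsUnivLength M.accepts ℓ) ∧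
          Real.exp (C * (2 : ℝ) ^ ((n : ℝ) / b)) ≤
            ((sInf {ℓ : ℕ | IsUnivLength M.accepts ℓ} : ℕ) : ℝ) := by
  have growth := tendsto_natCast_atTop_atTop.eventually
    (UnivLength.eventually_mul_rpow_div_le one_lt_two (by norm_num) hb C 40)
  refine eventually_atTop.1 ?_
  filter_upwards [growth, eventually_ge_atTop 35] with n hgrowth hn
  obtain ⟨Q, inst, hcard, M, hex, hexp⟩ := UnivLength.exists_nfa_exp_le_sInf_isUnivLength hα hn
  exact ⟨Q, inst, hcard, M, hex, (Real.exp_le_exp.2 hgrowth).trans hexp⟩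

/-- For every `ε > 0` and all sufficiently large `n` there is an `n`-state NFA over a
15-letter alphabet having a universal length, whose minimal universality length is at least
`exp ((1 - ε) * 2^(n/11))`. -/
theorem nfa_min_univ_length_lower_bound :
    ∀ ε : ℝ, 0 < ε → ∃ N : ℕ, ∀ n : ℕ, N ≤ n →
      ∃ (Q : Type) (inst : Fintype Q), @Fintype.card Q inst = n ∧
        ∃ M : NFA (Fin 15) Q,
          (∃ ℓ : ℕ, IsUnivLength M.accepts ℓ) ∧
          Real.exp ((1 - ε) * (2 : ℝ) ^ ((n : ℝ) / 11)) ≤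
            ((sInf {ℓ : ℕ | IsUnivLength M.accepts ℓ} : ℕ) : ℝ) :=
  fun ε _ => nfa_min_univ_length_lower_bound_general (by simp; norm_num) (by norm_num) (1 - ε)
end

section
/- There exists a constant c > 0 and an N such that for every n ≥ N there exists a regular expression r over a two-letter alphabet with at most n input symbols (occurrences of single-letter atoms) such that the language of r has a universal length and its minimal universality length is at least 2^(c·n). -/
/-- The number of input symbols (occurrences of single-letter atoms) of a regular expression. -/
def symCount {α : Type*} : RegularExpression α → ℕ
  | RegularExpression.zero => 0
  | RegularExpression.epsilon => 0
  | RegularExpression.char _ => 1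
  | RegularExpression.plus r s => symCount r + symCount s
  | RegularExpression.comp r s => symCount r + symCount s
  | RegularExpression.star r => symCount r

/-!
A word avoids the language of `counterErrors k` exactly when, cut into rows of `k + 2` bits (least
significant bit first, the last row possibly incomplete), consecutive rows are the binary
representations of consecutive numbers and the top bit of every row is `0`. That the rows count up
is a local condition: the lowest bit flips at every step, and bit `i + 1` flips exactly when bit `i`
goes from `1` to `0`. So each violation is witnessed by at most four letters at bounded distances,
which an expression with `O(k)` symbols detects. Such a word must end before the counter reaches
`2 ^ (k + 1)`, so the longest one starts at `0` and stops just before the top bit of the row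
`2 ^ (k + 1)`: its length is `(2 ^ (k + 1) + 1) * (k + 2) - 1`.
-/

namespace BinaryCounter

open RegularExpression
open scoped Computability Pointwise

section SymCount

variable {α : Type*}

@[simp]
theorem symCount_one : symCount (1 : RegularExpression α) = 0 := rfl

@[simp]
theorem symCount_char (a : α) : symCount (char a) = 1 := rfl

@[simp]
theorem symCount_add (r s : RegularExpression α) : symCount (r + s) = symCount r + symCount s := rfl

@[simp]
theorem symCount_mul (r s : RegularExpression α) : symCount (r * s) = symCount r + symCount s := rfl

@[simp]
theorem symCount_star (r : RegularExpression α) : symCount r.star = symCount r := rfl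

@[simp]
theorem symCount_pow (r : RegularExpression α) (n : ℕ) : symCount (r ^ n) = n * symCount r := by
  induction n with
  | zero => rw [zero_mul]; rfl
  | succ n ih =>
    change symCount (r ^ n * r) = _
    rw [symCount_mul, ih, Nat.succ_mul]

theorem symCount_list_sum (l : List (RegularExpression α)) :
    symCount l.sum = (l.map symCount).sum := by
  induction l with
  | nil => rfl
  | cons r l ih => rw [List.sum_cons, symCount_add, ih, List.map_cons, List.sum_cons]

end SymCount

theorem mem_matches'_add {α : Type*} {r s : RegularExpression α} {w : List α} :
    w ∈ (r + s).matches' ↔ w ∈ r.matches' ∨ w ∈ s.matches' := by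
  rw [matches'_add, Language.mem_add]

theorem mem_matches'_list_sum {α : Type*} {l : List (RegularExpression α)} {w : List α} :
    w ∈ l.sum.matches' ↔ ∃ r ∈ l, w ∈ r.matches' := by
  induction l with
  | nil => simp [Language.notMem_zero]
  | cons r l ih => rw [List.sum_cons, mem_matches'_add, ih, List.exists_mem_cons_iff]

section UnivSum

variable {α ι : Type*} [Fintype ι]

/-- The union `∑ i, r i` of a finite family of regular expressions. It is built from a list because
regular expressions, being syntax, do not form an additive monoid. -/
noncomputable def univSum (r : ι → RegularExpression α) : RegularExpression α :=
  (Finset.univ.toList.map r).sum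

@[simp]
theorem mem_matches'_univSum {r : ι → RegularExpression α} {w : List α} :
    w ∈ (univSum r).matches' ↔ ∃ i, w ∈ (r i).matches' := by
  simp [univSum, mem_matches'_list_sum]

@[simp]
theorem symCount_univSum (r : ι → RegularExpression α) :
    symCount (univSum r) = ∑ i, symCount (r i) := by
  rw [univSum, symCount_list_sum, List.map_map, Finset.sum_map_toList]
  rfl

end UnivSum

section LengthIn

variable {α : Type*} {S T : Set ℕ} {L : Language α} {w : List α}

/-- The language of all words whose length belongs to `S`. -/
def lengthIn (α : Type*) (S : Set ℕ) : Language α :=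
  {w | w.length ∈ S}

@[simp]
theorem mem_lengthIn : w ∈ lengthIn α S ↔ w.length ∈ S := Iff.rfl

theorem lengthIn_zero : lengthIn α 0 = 1 := by
  ext w
  simp [Language.mem_one]

theorem mem_lengthIn_mul :
    w ∈ lengthIn α S * L ↔ ∃ n ∈ S, n ≤ w.length ∧ w.drop n ∈ L := by
  rw [Language.mem_mul]
  constructor
  · rintro ⟨u, hu, v, hv, rfl⟩
    exact ⟨u.length, hu, by simp, by simpa using hv⟩
  · rintro ⟨n, hn, hle, hdrop⟩
    exact ⟨w.take n, by simpa [hle] using hn, _, hdrop, List.take_append_drop n w⟩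

theorem lengthIn_mul_lengthIn : lengthIn α S * lengthIn α T = lengthIn α (S + T) := by
  ext w
  simp only [mem_lengthIn_mul, mem_lengthIn, List.length_drop, Set.mem_add]
  constructor
  · rintro ⟨n, hn, hle, hT⟩
    exact ⟨n, hn, _, hT, Nat.add_sub_of_le hle⟩
  · rintro ⟨n, hn, t, ht, h⟩
    exact ⟨n, hn, by omega, by rwa [← h, Nat.add_sub_cancel_left]⟩

theorem lengthIn_pow (n : ℕ) : lengthIn α S ^ n = lengthIn α (n • S) := by
  induction n with
  | zero => rw [pow_zero, zero_nsmul, lengthIn_zero]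
  | succ n ih => rw [pow_succ, ih, lengthIn_mul_lengthIn, succ_nsmul]

theorem kstar_lengthIn : (lengthIn α S)∗ = lengthIn α (⋃ n : ℕ, n • S) := by
  ext w
  simp [Language.kstar_eq_iSup_pow, Language.mem_iSup, lengthIn_pow]

theorem mem_letter_mul {a : α} :
    w ∈ ({[a]} : Language α) * L ↔ w[0]? = some a ∧ w.drop 1 ∈ L := by
  have mem_letter {u : List α} : u ∈ ({[a]} : Language α) ↔ u = [a] := Iff.rfl
  cases w <;> simp [Language.mem_mul, mem_letter, and_comm, eq_comm]

theorem mem_lengthIn_mul_letter_mul {a : α} :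
    w ∈ lengthIn α S * ({[a]} * L) ↔ ∃ n ∈ S, w[n]? = some a ∧ w.drop (n + 1) ∈ L := by
  simp only [mem_lengthIn_mul, mem_letter_mul, List.getElem?_drop, List.drop_drop, add_zero]
  refine exists_congr fun n => and_congr_right fun _ => and_iff_right_of_imp fun h => ?_
  exact (List.getElem?_eq_some_iff.mp h.1).1.le

end LengthIn

theorem nsmul_Iic_one (n : ℕ) : n • Set.Iic (1 : ℕ) = Set.Iic n := by
  induction n with
  | zero => ext; simp
  | succ n ih =>
    ext m
    simp only [succ_nsmul, ih, Set.mem_add, Set.mem_Iic]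
    exact ⟨by omega, fun h => ⟨m - 1, by omega, min m 1, by omega, by omega⟩⟩

section AnyLetter

variable {α : Type*} [Fintype α]

/-- The regular expression `Σ` matching every one-letter word. -/
noncomputable def anyLetter (α : Type*) [Fintype α] : RegularExpression α :=
  univSum char

theorem symCount_anyLetter : symCount (anyLetter α) = Fintype.card α := by
  simp [anyLetter]

theorem matches'_anyLetter : (anyLetter α).matches' = lengthIn α {1} := by
  ext w
  simp only [anyLetter, mem_matches'_univSum, matches'_char, mem_lengthIn, Set.mem_singleton_iff,
    List.length_eq_one_iff]
  rfl

theorem matches'_anyLetter_pow (n : ℕ) : (anyLetter α ^ n).matches' = lengthIn α {n} := by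
  simp [matches'_anyLetter, lengthIn_pow]

theorem matches'_one_add_anyLetter_pow (n : ℕ) :
    ((1 + anyLetter α) ^ n).matches' = lengthIn α (Set.Iic n) := by
  have matches_le_one : (1 + anyLetter α).matches' = lengthIn α (Set.Iic 1) := by
    ext w
    rw [mem_matches'_add, matches'_anyLetter, matches'_epsilon]
    simp [Language.mem_one, Nat.le_one_iff_eq_zero_or_eq_one]
  rw [matches'_pow, matches_le_one, lengthIn_pow, nsmul_Iic_one]

theorem matches'_star_anyLetter_pow (n : ℕ) :
    (star (anyLetter α ^ n)).matches' = lengthIn α (Set.range (· * n)) := by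
  rw [matches'_star, matches'_anyLetter_pow, kstar_lengthIn]
  congr 1
  ext m
  simp [eq_comm]

theorem mem_matches'_star_anyLetter (w : List α) : w ∈ (star (anyLetter α)).matches' := by
  simp [matches'_anyLetter, kstar_lengthIn]

end AnyLetter

section Bits

theorem testBit_succ_zero (n : ℕ) : (n + 1).testBit 0 = !n.testBit 0 := by
  simp only [Nat.testBit_zero, ← decide_not, decide_eq_decide]
  omega

theorem testBit_succ_succ (n i : ℕ) :
    (n + 1).testBit (i + 1) = (n.testBit (i + 1) ^^ (n.testBit i && !(n + 1).testBit i)) := by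
  induction i generalizing n with
  | zero =>
    simp only [Nat.testBit_add_one, Nat.testBit_zero]
    grind
  | succ i ih =>
    rw [Nat.testBit_add_one (n + 1) (i + 1), Nat.testBit_add_one n (i + 1),
      Nat.testBit_add_one (n + 1) i, Nat.testBit_add_one n i]
    have half_odd (m : ℕ) : (2 * m + 1) / 2 = m := by omega
    obtain ⟨m, rfl | rfl⟩ := n.even_or_odd'
    · simp [half_odd]
    · have half_even : (2 * m + 1 + 1) / 2 = m + 1 := by omega
      rw [half_odd, half_even]
      exact ih m

theorem eq_testBit_succ {x y : ℕ → Bool} {m n : ℕ} (hx : ∀ i ≤ m, x i = n.testBit i)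
    (low : y 0 = !x 0) (carry : ∀ i < m, y (i + 1) = (x (i + 1) ^^ (x i && !y i))) :
    ∀ i ≤ m, y i = (n + 1).testBit i := by
  intro i hi
  induction i with
  | zero => rw [low, hx 0 hi, testBit_succ_zero]
  | succ i ih =>
    rw [carry i hi, ih (by omega), hx i (by omega), hx (i + 1) hi, testBit_succ_succ]

theorem eq_testBit_add {f : ℕ → ℕ → Bool} {m n N : ℕ} (first : ∀ i ≤ m, f 0 i = n.testBit i)
    (low : ∀ q < N, f (q + 1) 0 = !f q 0)
    (carry : ∀ q < N, ∀ i < m, f (q + 1) (i + 1) = (f q (i + 1) ^^ (f q i && !f (q + 1) i))) :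
    ∀ q ≤ N, ∀ i ≤ m, f q i = (n + q).testBit i := by
  intro q hq
  induction q with
  | zero => exact first
  | succ q ih => exact eq_testBit_succ (ih (by omega)) (low q hq) (carry q hq)

theorem exists_testBit_eq (x : ℕ → Bool) (m : ℕ) : ∃ n < 2 ^ m, ∀ i < m, n.testBit i = x i :=
  ⟨_, Nat.ofBits_lt_two_pow fun i : Fin m => x i, fun i hi => Nat.testBit_ofBits_lt _ i hi⟩

theorem exists_top_eq_true {f : ℕ → ℕ → Bool} {m : ℕ} (low : ∀ q < 2 ^ m, f (q + 1) 0 = !f q 0)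
    (carry : ∀ q < 2 ^ m, ∀ i < m,
      f (q + 1) (i + 1) = (f q (i + 1) ^^ (f q i && !f (q + 1) i))) :
    ∃ q ≤ 2 ^ m, f q m = true := by
  by_cases top_first : f 0 m = true
  · exact ⟨0, Nat.zero_le _, top_first⟩
  obtain ⟨n, hn, hbits⟩ := exists_testBit_eq (f 0) m
  have first : ∀ i ≤ m, f 0 i = n.testBit i := by
    intro i hi
    obtain hlt | rfl := hi.lt_or_eq
    · exact (hbits i hlt).symm
    · rw [Nat.testBit_lt_two_pow hn]
      simpa using top_first
  refine ⟨2 ^ m - n, Nat.sub_le _ _, ?_⟩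
  rw [eq_testBit_add first low carry _ (Nat.sub_le _ _) m le_rfl, Nat.add_sub_of_le hn.le,
    Nat.testBit_two_pow_self]

end Bits

section TableWord

variable {α : Type*} {m : ℕ}

/-- The first `ℓ` letters of the infinite table `f` with rows of length `m`, read row by row. -/
def tableWord (m : ℕ) (f : ℕ → ℕ → α) (ℓ : ℕ) : List α :=
  (List.range ℓ).map fun p => f (p / m) (p % m)

theorem length_tableWord (f : ℕ → ℕ → α) (ℓ : ℕ) : (tableWord m f ℓ).length = ℓ := by
  simp [tableWord]

theorem getElem?_tableWord_eq_some_iff {f : ℕ → ℕ → α} {ℓ q i : ℕ} {a : α} (hi : i < m) :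
    (tableWord m f ℓ)[q * m + i]? = some a ↔ q * m + i < ℓ ∧ f q i = a := by
  have row : (q * m + i) / m = q := by
    rw [Nat.mul_comm, Nat.mul_add_div (by omega), Nat.div_eq_of_lt hi, add_zero]
  have column : (q * m + i) % m = i := by
    rw [Nat.mul_comm, Nat.mul_add_mod, Nat.mod_eq_of_lt hi]
  simp [tableWord, List.getElem?_eq_some_iff, row, column]

theorem exists_eq_tableWord [Inhabited α] (m : ℕ) (w : List α) :
    ∃ f, w = tableWord m f w.length := by
  refine ⟨fun q i => w.getD (q * m + i) default, List.ext_getElem ?_ fun p hp _ => ?_⟩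
  · rw [length_tableWord]
  · simp [tableWord, Nat.div_add_mod', hp]

end TableWord

/-- Matches the binary words in which some row of `k + 2` bits has the same lowest bit `a` as the
row before it. -/
noncomputable def lowBitError (k : ℕ) (a : Bool) : RegularExpression Bool :=
  star (anyLetter Bool ^ (k + 2)) * char a * anyLetter Bool ^ (k + 1) * char a *
    star (anyLetter Bool)

/-- Matches the binary words in which, for some `i ≤ k`, bits `i` and `i + 1` of some row of `k + 2`
bits are `a` and `b`, bit `i` of the next row is `c`, and bit `i + 1` of the next row is not the sum
of `b` and the carry `a && !c`. -/
noncomputable def carryError (k : ℕ) (a b c : Bool) : RegularExpression Bool :=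
  star (anyLetter Bool ^ (k + 2)) * (1 + anyLetter Bool) ^ k * char a * char b *
    anyLetter Bool ^ k * char c * char (!(b ^^ (a && !c))) * star (anyLetter Bool)

/-- Matches the binary words in which some row of `k + 2` bits has its highest bit set. -/
noncomputable def topBitError (k : ℕ) : RegularExpression Bool :=
  star (anyLetter Bool ^ (k + 2)) * anyLetter Bool ^ (k + 1) * char true * star (anyLetter Bool)

/-- The regular expression of size `O(k)` whose language omits exactly the words that, read in rows
of `k + 2` bits, count upwards without ever setting the highest bit. -/
noncomputable def counterErrors (k : ℕ) : RegularExpression Bool :=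
  univSum (lowBitError k) + univSum (fun p : Bool × Bool × Bool => carryError k p.1 p.2.1 p.2.2) +
    topBitError k

theorem symCount_counterErrors (k : ℕ) : symCount (counterErrors k) = 60 * k + 109 := by
  simp only [counterErrors, lowBitError, carryError, topBitError, symCount_add, symCount_mul,
    symCount_star, symCount_pow, symCount_one, symCount_char, symCount_anyLetter, symCount_univSum,
    Finset.sum_const, Finset.card_univ, Fintype.card_prod, Fintype.card_bool, smul_eq_mul]
  ring

section Errors

variable {k : ℕ} {w : List Bool}

theorem mem_lowBitError_iff {a : Bool} :
    w ∈ (lowBitError k a).matches' ↔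
      ∃ q, w[q * (k + 2)]? = some a ∧ w[(q + 1) * (k + 2)]? = some a := by
  have next_row (q : ℕ) : q * (k + 2) + 1 + (k + 1) = (q + 1) * (k + 2) := by ring
  simp only [lowBitError, matches'_mul, matches'_char, matches'_star_anyLetter_pow,
    matches'_anyLetter_pow, mul_assoc, mem_lengthIn_mul_letter_mul, mem_matches'_star_anyLetter,
    List.getElem?_drop, Set.exists_range_iff, Set.mem_singleton_iff, exists_eq_left, and_true,
    next_row]

theorem mem_carryError_iff {a b c : Bool} :
    w ∈ (carryError k a b c).matches' ↔
      ∃ q, ∃ i ≤ k, w[q * (k + 2) + i]? = some a ∧ w[q * (k + 2) + (i + 1)]? = some b ∧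
        w[(q + 1) * (k + 2) + i]? = some c ∧
        w[(q + 1) * (k + 2) + (i + 1)]? = some (!(b ^^ (a && !c))) := by
  have next_row (q i : ℕ) : q * (k + 2) + i + (1 + (1 + k)) = (q + 1) * (k + 2) + i := by ring
  simp only [carryError, matches'_mul, matches'_char, matches'_star_anyLetter_pow,
    matches'_anyLetter_pow, matches'_one_add_anyLetter_pow, mul_assoc]
  rw [← mul_assoc (lengthIn _ _) (lengthIn _ _), lengthIn_mul_lengthIn]
  simp only [mem_lengthIn_mul_letter_mul, mem_letter_mul, mem_matches'_star_anyLetter,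
    Set.mem_add, Set.mem_range, Set.mem_Iic, Set.mem_singleton_iff, exists_exists_eq_and,
    exists_eq_left, List.getElem?_drop, List.drop_drop, and_true, add_zero, ← next_row]
  grind

theorem mem_topBitError_iff :
    w ∈ (topBitError k).matches' ↔ ∃ q, w[q * (k + 2) + (k + 1)]? = some true := by
  simp only [topBitError, matches'_mul, matches'_char, matches'_star_anyLetter_pow,
    matches'_anyLetter_pow, mul_assoc]
  rw [← mul_assoc (lengthIn _ _) (lengthIn _ _), lengthIn_mul_lengthIn]
  simp only [mem_lengthIn_mul_letter_mul, mem_matches'_star_anyLetter, Set.add_singleton,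
    Set.mem_image, Set.exists_range_iff, exists_exists_eq_and, and_true]

variable {f : ℕ → ℕ → Bool} {ℓ : ℕ}

theorem exists_tableWord_mem_lowBitError_iff :
    (∃ a, tableWord (k + 2) f ℓ ∈ (lowBitError k a).matches') ↔
      ∃ q, (q + 1) * (k + 2) < ℓ ∧ f (q + 1) 0 = f q 0 := by
  have lookup (q a) : (tableWord (k + 2) f ℓ)[q * (k + 2)]? = some a ↔
      q * (k + 2) < ℓ ∧ f q 0 = a :=
    getElem?_tableWord_eq_some_iff (i := 0) (Nat.succ_pos _)
  simp only [mem_lowBitError_iff, lookup]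
  constructor
  · rintro ⟨a, q, ⟨-, rfl⟩, hlt, heq⟩
    exact ⟨q, hlt, heq⟩
  · rintro ⟨q, hlt, heq⟩
    exact ⟨f q 0, q, ⟨by lia, rfl⟩, hlt, heq⟩

theorem exists_tableWord_mem_carryError_iff :
    (∃ a b c, tableWord (k + 2) f ℓ ∈ (carryError k a b c).matches') ↔
      ∃ q, ∃ i ≤ k, (q + 1) * (k + 2) + (i + 1) < ℓ ∧
        f (q + 1) (i + 1) ≠ (f q (i + 1) ^^ (f q i && !f (q + 1) i)) := by
  simp only [mem_carryError_iff, ← Bool.eq_not]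
  constructor
  · rintro ⟨a, b, c, q, i, hi, ha, hb, hc, hd⟩
    rw [getElem?_tableWord_eq_some_iff (by omega)] at ha hb hc hd
    rcases ha with ⟨-, rfl⟩
    rcases hb with ⟨-, rfl⟩
    rcases hc with ⟨-, rfl⟩
    exact ⟨q, i, hi, hd⟩
  · rintro ⟨q, i, hi, hlt, heq⟩
    refine ⟨f q i, f q (i + 1), f (q + 1) i, q, i, hi, ?_, ?_, ?_, ?_⟩ <;>
      rw [getElem?_tableWord_eq_some_iff (by omega)]
    exacts [⟨by lia, rfl⟩, ⟨by lia, rfl⟩, ⟨by lia, rfl⟩, ⟨hlt, heq⟩]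

theorem tableWord_mem_topBitError_iff :
    tableWord (k + 2) f ℓ ∈ (topBitError k).matches' ↔
      ∃ q, q * (k + 2) + (k + 1) < ℓ ∧ f q (k + 1) = true := by
  simp only [mem_topBitError_iff, getElem?_tableWord_eq_some_iff (Nat.lt_succ_self (k + 1))]

theorem tableWord_notMem_counterErrors_iff :
    tableWord (k + 2) f ℓ ∉ (counterErrors k).matches' ↔
      (∀ q, (q + 1) * (k + 2) < ℓ → f (q + 1) 0 = !f q 0) ∧
      (∀ q, ∀ i ≤ k, (q + 1) * (k + 2) + (i + 1) < ℓ →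
        f (q + 1) (i + 1) = (f q (i + 1) ^^ (f q i && !f (q + 1) i))) ∧
      ∀ q, q * (k + 2) + (k + 1) < ℓ → f q (k + 1) = false := by
  simp only [counterErrors, mem_matches'_add, mem_matches'_univSum, Prod.exists,
    exists_tableWord_mem_lowBitError_iff, exists_tableWord_mem_carryError_iff,
    tableWord_mem_topBitError_iff]
  push Not
  simp only [and_assoc, ← Bool.eq_not, Bool.not_true]

end Errors

theorem isUnivLength_counterErrors_of_le {k ℓ : ℕ} (hℓ : (2 ^ (k + 1) + 1) * (k + 2) ≤ ℓ) :
    IsUnivLength (counterErrors k).matches' ℓ := by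
  rintro w rfl
  obtain ⟨f, hf⟩ := exists_eq_tableWord (k + 2) w
  by_contra hw
  rw [hf, tableWord_notMem_counterErrors_iff] at hw
  obtain ⟨low, carry, top⟩ := hw
  have inside {q i : ℕ} (hq : q ≤ 2 ^ (k + 1)) (hi : i < k + 2) : q * (k + 2) + i < w.length := by
    nlinarith
  obtain ⟨q, hq, hset⟩ := exists_top_eq_true
    (fun q hq => low q (inside hq (Nat.succ_pos _)))
    (fun q hq i hi => carry q i (Nat.le_of_lt_succ hi) (inside hq (by omega)))
  simp [top q (inside hq (Nat.lt_succ_self _))] at hset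

theorem not_isUnivLength_counterErrors_of_lt {k ℓ : ℕ} (hℓ : ℓ < (2 ^ (k + 1) + 1) * (k + 2)) :
    ¬IsUnivLength (counterErrors k).matches' ℓ := by
  intro huniv
  refine tableWord_notMem_counterErrors_iff.mpr ⟨?_, ?_, ?_⟩
    (huniv (tableWord (k + 2) Nat.testBit ℓ) (length_tableWord _ _))
  · exact fun q _ => testBit_succ_zero q
  · exact fun q i _ _ => testBit_succ_succ q i
  · intro q hq
    apply Nat.testBit_lt_two_pow
    by_contra! hge
    nlinarith

theorem isUnivLength_counterErrors_iff {k ℓ : ℕ} :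
    IsUnivLength (counterErrors k).matches' ℓ ↔ (2 ^ (k + 1) + 1) * (k + 2) ≤ ℓ :=
  ⟨fun h => not_lt.mp fun hlt => not_isUnivLength_counterErrors_of_lt hlt h,
    isUnivLength_counterErrors_of_le⟩

theorem sInf_isUnivLength_counterErrors (k : ℕ) :
    sInf {ℓ | IsUnivLength (counterErrors k).matches' ℓ} = (2 ^ (k + 1) + 1) * (k + 2) := by
  simp only [isUnivLength_counterErrors_iff]
  exact csInf_Ici

end BinaryCounter

/-- There is a constant `c > 0` such that for all sufficiently large `n` there is a binary
regular expression with at most `n` input symbols having a universal length, whose minimal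
universality length is at least `2 ^ (c * n)`. -/
theorem regex_min_univ_length_exponential :
    ∃ c : ℝ, 0 < c ∧ ∃ N : ℕ, ∀ n : ℕ, N ≤ n →
      ∃ r : RegularExpression Bool,
        symCount r ≤ n ∧
        (∃ ℓ : ℕ, IsUnivLength r.matches' ℓ) ∧
        (2 : ℝ) ^ (c * (n : ℝ)) ≤
          ((sInf {ℓ : ℕ | IsUnivLength r.matches' ℓ} : ℕ) : ℝ) := by
  -- With `k = n / 64 - 2` one has `60 * k + 109 ≤ 64 * (k + 2) ≤ n < 64 * (k + 3) ≤ 128 * (k + 1)`.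
  refine ⟨1 / 128, by norm_num, 192, fun n hn => ?_⟩
  obtain ⟨k, hk⟩ : ∃ k, n / 64 = k + 2 := ⟨n / 64 - 2, by omega⟩
  refine ⟨BinaryCounter.counterErrors k, ?_,
    ⟨_, BinaryCounter.isUnivLength_counterErrors_iff.mpr le_rfl⟩, ?_⟩
  · rw [BinaryCounter.symCount_counterErrors]
    omega
  · have hexp : 1 / 128 * (n : ℝ) ≤ (k + 1 : ℕ) := by
      have : (n : ℝ) ≤ (128 * (k + 1) : ℕ) := by exact_mod_cast (by omega : n ≤ 128 * (k + 1))
      push_cast at this ⊢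
      linarith
    have hpow : 2 ^ (k + 1) ≤ (2 ^ (k + 1) + 1) * (k + 2) :=
      (Nat.le_succ _).trans (Nat.le_mul_of_pos_right _ (Nat.succ_pos _))
    calc (2 : ℝ) ^ (1 / 128 * (n : ℝ)) ≤ 2 ^ ((k + 1 : ℕ) : ℝ) :=
          Real.rpow_le_rpow_of_exponent_le one_le_two hexp
      _ = (2 ^ (k + 1) : ℕ) := by rw [Real.rpow_natCast, Nat.cast_pow, Nat.cast_ofNat]
      _ ≤ _ := by rw [BinaryCounter.sInf_isUnivLength_counterErrors]; exact_mod_cast hpow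
end

section
/- For every m ≥ 1 there exists a nondeterministic transition system (Selection Gadget) over a two-letter alphabet {α₁, α₂} on the state set Q = {acc} ∪ {p₀, p₁, …, p_m} ∪ {v₁, …, v_m} ∪ {v̄₁, …, v̄_m} (all states distinct, so 3m + 2 states) with δ(acc, a) = {acc} for every letter a, such that for every subset C ⊆ Q with p₀ ∈ C and C ∩ ({acc, p₁, …, p_m}) = ∅ the following hold, where δ(C, w) denotes the set of states reachable from C on word w: (i) for every Boolean vector b : {1, …, m} → Bool there exists a word w of length m with δ(C, w) = {p_m} ∪ {v_i : b(i) = true} ∪ {v̄_i : b(i) = false}; (ii) for every word w of length m, acc ∉ δ(C, w) and δ(C, w) = {p_m} ∪ {v_i : b(i) = true} ∪ {v̄_i : b(i) = false} for some Boolean vector b, and distinct words of length m yield distinct vectors b; (iii) for every word w of length strictly less than m, p_m ∉ δ(C, w); (iv) for every word w of length strictly greater than m, acc ∈ δ(C, w). -/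
/-- The state set of the Selection Gadget: the absorbing state `acc`, the control-flow states
`p 0, …, p m`, and the variable states `v 1, …, v m` and `vbar 1, …, vbar m`
(indexed here by `Fin m`); in total `3m + 2` distinct states. -/
inductive SelState (m : ℕ) where
  | acc : SelState m
  | p : Fin (m + 1) → SelState m
  | v : Fin m → SelState m
  | vbar : Fin m → SelState m
  deriving DecidableEq

/-- One step of a nondeterministic transition system on a set of states. -/
def stepSet {Q A : Type*} (δ : Q → A → Set Q) (C : Set Q) (a : A) : Set Q :=
  ⋃ q ∈ C, δ q a

/-- The set of states reachable from the configuration `C` by reading the word `w`. -/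
def evalFrom {Q A : Type*} (δ : Q → A → Set Q) (C : Set Q) (w : List A) : Set Q :=
  w.foldl (stepSet δ) C

/-!
The gadget is a shift register driven by a counter. A token moves along `p 0, …, p m` and falls
into `acc` one step after reaching `p m`; while it is in one of `p 0, …, p (m - 1)`, the letter read
is written as a literal into the last slot, and at every step all slots move down by one. After `m`
letters every slot present in the initial configuration has been shifted out, and slot `i` holds
the `i`-th letter.
-/

section Runs

variable {Q A : Type*} {δ : Q → A → Set Q} {C : Set Q}

theorem mem_stepSet {a : A} {s : Q} : s ∈ stepSet δ C a ↔ ∃ q ∈ C, s ∈ δ q a := by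
  simp only [stepSet, Set.mem_iUnion, exists_prop]

variable (δ C)

theorem evalFrom_nil : evalFrom δ C [] = C := rfl

theorem evalFrom_cons (a : A) (w : List A) :
    evalFrom δ C (a :: w) = evalFrom δ (stepSet δ C a) w := rfl

theorem evalFrom_append (u w : List A) :
    evalFrom δ C (u ++ w) = evalFrom δ (evalFrom δ C u) w :=
  List.foldl_append

theorem evalFrom_concat (w : List A) (a : A) :
    evalFrom δ C (w ++ [a]) = stepSet δ (evalFrom δ C w) a :=
  evalFrom_append δ C w [a]

end Runs

namespace SelState

variable {m : ℕ}

/-- The literal of variable `i` with sign `c`: `v i` if `c` is true and `vbar i` otherwise. -/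
def lit : Bool → Fin m → SelState m
  | true, i => v i
  | false, i => vbar i

/-- The transition function of the shift register: `p j` with `j < m` advances and writes the
letter into the last slot, `p m` falls into `acc`; literals move one slot down and disappear from
slot `0`. -/
def shiftRegister : SelState m → Bool → Set (SelState m)
  | acc, _ => {acc}
  | p j, a =>
    if h : (j : ℕ) < m then {p ⟨j + 1, by omega⟩, lit a ⟨m - 1, by omega⟩} else {acc}
  | v i, _ => v '' {k | (k : ℕ) + 1 = i}
  | vbar i, _ => vbar '' {k | (k : ℕ) + 1 = i}

/-- A configuration in which a run of the gadget may start: it contains `p 0`, any literals, and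
nothing else. -/
structure IsInitial (C : Set (SelState m)) : Prop where
  acc_notMem : acc ∉ C
  p_mem_iff : ∀ k, p k ∈ C ↔ k = 0

/-- The configuration that encodes the Boolean vector `b`, with the token in `p m`. -/
def assignmentConfig (b : Fin m → Bool) : Set (SelState m) :=
  {p (Fin.last m)} ∪ {s | ∃ i, b i = true ∧ s = v i} ∪ {s | ∃ i, b i = false ∧ s = vbar i}

theorem lit_mem_assignmentConfig {b : Fin m → Bool} {c : Bool} {i : Fin m} :
    lit c i ∈ assignmentConfig b ↔ b i = c := by
  cases c <;> simp [lit, assignmentConfig]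

theorem assignmentConfig_injective :
    Function.Injective (assignmentConfig : (Fin m → Bool) → Set (SelState m)) := by
  intro b b' h
  funext i
  have hi : lit (b' i) i ∈ assignmentConfig b := h ▸ lit_mem_assignmentConfig.2 rfl
  exact lit_mem_assignmentConfig.1 hi

section Step

variable {C : Set (SelState m)} {q : SelState m} {a c : Bool}

theorem acc_mem_shiftRegister_iff : acc ∈ shiftRegister q a ↔ q = acc ∨ q = p (Fin.last m) := by
  cases q <;> cases a <;> grind [shiftRegister, lit]

theorem p_mem_shiftRegister_iff {k : Fin (m + 1)} :
    p k ∈ shiftRegister q a ↔ ∃ j, q = p j ∧ (k : ℕ) = j + 1 := by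
  cases q <;> cases a <;> grind [shiftRegister, lit]

theorem lit_mem_shiftRegister_iff {i : Fin m} :
    lit c i ∈ shiftRegister q a ↔
      (∃ k : Fin m, q = lit c k ∧ (i : ℕ) + 1 = k) ∨
        c = a ∧ (i : ℕ) + 1 = m ∧ ∃ j : Fin (m + 1), q = p j ∧ (j : ℕ) < m := by
  cases q <;> cases a <;> cases c <;> grind [shiftRegister, lit]

theorem acc_mem_stepSet_iff :
    acc ∈ stepSet shiftRegister C a ↔ acc ∈ C ∨ p (Fin.last m) ∈ C := by
  simp only [mem_stepSet, acc_mem_shiftRegister_iff, and_or_left, exists_or, exists_eq_right]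

theorem p_mem_stepSet_iff {k : Fin (m + 1)} :
    p k ∈ stepSet shiftRegister C a ↔ ∃ j, p j ∈ C ∧ (k : ℕ) = j + 1 := by
  grind [mem_stepSet, p_mem_shiftRegister_iff]

theorem lit_mem_stepSet_iff_of_add_one_lt {i : ℕ} (h : i + 1 < m) :
    lit c ⟨i, by omega⟩ ∈ stepSet shiftRegister C a ↔ lit c ⟨i + 1, h⟩ ∈ C := by
  grind [mem_stepSet, lit_mem_shiftRegister_iff]

theorem lit_mem_stepSet_iff_of_add_one_eq {i : Fin m} (h : (i : ℕ) + 1 = m) :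
    lit c i ∈ stepSet shiftRegister C a ↔ c = a ∧ ∃ j : Fin (m + 1), p j ∈ C ∧ (j : ℕ) < m := by
  grind [mem_stepSet, lit_mem_shiftRegister_iff]

end Step

theorem lit_mem_evalFrom_iff_of_add_lt {C : Set (SelState m)} {c : Bool} {w : List Bool} {i : ℕ}
    (h : i + w.length < m) :
    lit c ⟨i, by omega⟩ ∈ evalFrom shiftRegister C w ↔ lit c ⟨i + w.length, h⟩ ∈ C := by
  induction w generalizing C with
  | nil => rfl
  | cons a w ih =>
    rw [List.length_cons] at h
    rw [evalFrom_cons, ih (by omega), lit_mem_stepSet_iff_of_add_one_lt (by omega)]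
    rfl

namespace IsInitial

variable {C : Set (SelState m)}

theorem p_mem_evalFrom_iff (hC : IsInitial C) {w : List Bool} {k : Fin (m + 1)} :
    p k ∈ evalFrom shiftRegister C w ↔ (k : ℕ) = w.length := by
  induction w using List.reverseRecOn generalizing k with
  | nil => rw [evalFrom_nil, hC.p_mem_iff, Fin.ext_iff]; rfl
  | append_singleton w a ih =>
    rw [evalFrom_concat, p_mem_stepSet_iff, List.length_append, List.length_singleton]
    simp only [ih]
    exact ⟨fun ⟨_, hj, hk⟩ => hj ▸ hk, fun hk => ⟨⟨w.length, by omega⟩, rfl, hk⟩⟩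

theorem acc_mem_evalFrom_iff (hC : IsInitial C) {w : List Bool} :
    acc ∈ evalFrom shiftRegister C w ↔ m < w.length := by
  induction w using List.reverseRecOn with
  | nil => simp [evalFrom_nil, hC.acc_notMem]
  | append_singleton w a ih =>
    rw [evalFrom_concat, acc_mem_stepSet_iff, ih, hC.p_mem_evalFrom_iff, Fin.val_last,
      List.length_append, List.length_singleton]
    omega

theorem lit_mem_evalFrom_append_cons_iff (hC : IsInitial C) {u w : List Bool} {a c : Bool}
    {i : Fin m} (hu : u.length < m) (hi : (i : ℕ) + w.length + 1 = m) :
    lit c i ∈ evalFrom shiftRegister C (u ++ a :: w) ↔ c = a := by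
  have htoken : p ⟨u.length, by omega⟩ ∈ evalFrom shiftRegister C u := hC.p_mem_evalFrom_iff.2 rfl
  rw [evalFrom_append, evalFrom_cons, lit_mem_evalFrom_iff_of_add_lt (by omega),
    lit_mem_stepSet_iff_of_add_one_eq hi]
  exact and_iff_left ⟨_, htoken, hu⟩

theorem evalFrom_ofFn (hC : IsInitial C) (b : Fin m → Bool) :
    evalFrom shiftRegister C (List.ofFn b) = assignmentConfig b := by
  have hlit (c : Bool) (i : Fin m) :
      lit c i ∈ evalFrom shiftRegister C (List.ofFn b) ↔ lit c i ∈ assignmentConfig b := by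
    have hsplit : (List.ofFn b).take i ++ b i :: (List.ofFn b).drop (i + 1) = List.ofFn b := by
      have hdrop := List.drop_eq_getElem_cons (l := List.ofFn b) (i := i) (by simp)
      rw [List.getElem_ofFn] at hdrop
      rw [← hdrop, List.take_append_drop]
    rw [← hsplit, hC.lit_mem_evalFrom_append_cons_iff (by simp) (by grind),
      lit_mem_assignmentConfig, eq_comm]
  ext s
  cases s with
  | acc => simp [hC.acc_mem_evalFrom_iff, assignmentConfig]
  | p k => simp [hC.p_mem_evalFrom_iff, assignmentConfig, Fin.ext_iff]
  | v i => exact hlit true i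
  | vbar i => exact hlit false i

end IsInitial

end SelState

/-- The Selection Gadget: a nondeterministic transition system over a two-letter alphabet on
`3m + 2` states such that, from any configuration containing `p 0`, none of `acc, p 1, …, p m`:
(i) every Boolean vector `b` is reachable by some word of length `m` as the configuration
`{p m} ∪ {v i : b i} ∪ {vbar i : ¬ b i}`; (ii) every word of length `m` avoids `acc` and yields
such a configuration, distinct words giving distinct vectors; (iii) no word of length `< m`
reaches `p m`; (iv) every word of length `> m` reaches `acc`. -/
theorem selection_gadget (m : ℕ) (hm : 1 ≤ m) :
    ∃ δ : SelState m → Bool → Set (SelState m),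
      (∀ a : Bool, δ SelState.acc a = {SelState.acc}) ∧
      ∀ C : Set (SelState m),
        SelState.p 0 ∈ C →
        SelState.acc ∉ C →
        (∀ i : Fin (m + 1), i ≠ 0 → SelState.p i ∉ C) →
        ((∀ b : Fin m → Bool, ∃ w : List Bool, w.length = m ∧
            evalFrom δ C w =
              {SelState.p (Fin.last m)} ∪
                {s | ∃ i : Fin m, b i = true ∧ s = SelState.v i} ∪
                {s | ∃ i : Fin m, b i = false ∧ s = SelState.vbar i}) ∧
         (∀ w : List Bool, w.length = m →
            SelState.acc ∉ evalFrom δ C w ∧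
            ∃ b : Fin m → Bool, evalFrom δ C w =
              {SelState.p (Fin.last m)} ∪
                {s | ∃ i : Fin m, b i = true ∧ s = SelState.v i} ∪
                {s | ∃ i : Fin m, b i = false ∧ s = SelState.vbar i}) ∧
         (∀ w₁ w₂ : List Bool, w₁.length = m → w₂.length = m →
            evalFrom δ C w₁ = evalFrom δ C w₂ → w₁ = w₂) ∧
         (∀ w : List Bool, w.length < m → SelState.p (Fin.last m) ∉ evalFrom δ C w) ∧
         (∀ w : List Bool, m < w.length → SelState.acc ∈ evalFrom δ C w)) := by
  have exists_ofFn {w : List Bool} (hw : w.length = m) : ∃ b : Fin m → Bool, List.ofFn b = w := by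
    subst hw
    exact ⟨w.get, List.ofFn_get w⟩
  refine ⟨SelState.shiftRegister, fun _ => rfl, fun C hzero hacc hp => ?_⟩
  have hC : SelState.IsInitial C :=
    ⟨hacc, fun k => ⟨fun hk => by_contra fun hk0 => hp k hk0 hk, fun hk => hk ▸ hzero⟩⟩
  refine ⟨fun b => ⟨List.ofFn b, List.length_ofFn, hC.evalFrom_ofFn b⟩, fun w hw => ⟨?_, ?_⟩,
    fun w₁ w₂ hw₁ hw₂ h => ?_, fun w hw h => ?_, fun w => hC.acc_mem_evalFrom_iff.2⟩
  · rw [hC.acc_mem_evalFrom_iff]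
    exact hw.not_gt
  · obtain ⟨b, rfl⟩ := exists_ofFn hw
    exact ⟨b, hC.evalFrom_ofFn b⟩
  · obtain ⟨b₁, rfl⟩ := exists_ofFn hw₁
    obtain ⟨b₂, rfl⟩ := exists_ofFn hw₂
    rw [hC.evalFrom_ofFn, hC.evalFrom_ofFn] at h
    exact congrArg List.ofFn (SelState.assignmentConfig_injective h)
  · exact hw.ne' (hC.p_mem_evalFrom_iff.1 h)
end

section
/- For every m ≥ 1 there exists a nondeterministic transition system (Equality Gadget) over a two-letter alphabet {α₁, α₂} on the state set Q = {acc} ∪ {p₀, p₁, …, p_m} ∪ {u₁, …, u_m, ū₁, …, ū_m} ∪ {v₁, …, v_m, v̄₁, …, v̄_m} (all states distinct, so 5m + 2 states) with δ(acc, a) = {acc} for every letter a, such that for every subset C ⊆ Q with p₀ ∈ C, C ∩ ({acc, p₁, …, p_m}) = ∅, and such that for every i exactly one of u_i, ū_i belongs to C and exactly one of v_i, v̄_i belongs to C, the following hold, where δ(C, w) denotes the set of states reachable from C on word w: (i) if for every i one has (u_i ∈ C ↔ v_i ∈ C), then there exists a word w of length m with acc ∉ δ(C, w) and δ(C, w)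 = {p_m} ∪ (C ∩ ({u₁,…,u_m,ū₁,…,ū_m,v₁,…,v_m,v̄₁,…,v̄_m})), and every word w of length m with acc ∉ δ(C, w) satisfies this same equality; (ii) if there exists i with (u_i ∈ C) not equivalent to (v_i ∈ C), then acc ∈ δ(C, w) for every word w of length at least m; (iii) acc ∈ δ(C, w) for every word w of length strictly greater than m. -/
/-- The state set of the Equality Gadget: the absorbing state `acc`, the control-flow states
`p 0, …, p m`, and the variable states `u i, ubar i, v i, vbar i` for `i` ranging over `Fin m`;
in total `5m + 2` distinct states. -/
inductive EqState (m : ℕ) where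
  | acc : EqState m
  | p : Fin (m + 1) → EqState m
  | u : Fin m → EqState m
  | ubar : Fin m → EqState m
  | v : Fin m → EqState m
  | vbar : Fin m → EqState m
  deriving DecidableEq

/-- The variable states of the Equality Gadget. -/
def EqState.varStates (m : ℕ) : Set (EqState m) :=
  {s | ∃ i : Fin m, s = EqState.u i ∨ s = EqState.ubar i ∨ s = EqState.v i ∨ s = EqState.vbar i}

/-!
The gadget is deterministic. The control state counts the letters read, from `p 0` up to `p m`, and
the next letter sends it to `acc`. The states of each variable rotate downwards, so that bit `i`
reaches position `0` just when letter `i` (counted from `0`) is read; there it is compared with the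
letter, and a disagreement leads to `acc`. After `m` letters the rotation is back to the identity.
A word of length `m` therefore avoids `acc` if and only if it spells the values of both variables.
-/

theorem evalFrom_singleton {Q A : Type*} (g : Q → A → Q) (C : Set Q) (w : List A) :
    evalFrom (fun q a => {g q a}) C w = (fun q => w.foldl g q) '' C := by
  induction w generalizing C with
  | nil => exact (Set.image_id' C).symm
  | cons a w ih =>
    have hstep : stepSet (fun q a => {g q a}) C a = (g · a) '' C := (Set.image_eq_iUnion _ _).symm
    calc evalFrom (fun q a => {g q a}) C (a :: w)
        = evalFrom (fun q a => {g q a}) ((g · a) '' C) w := by rw [← hstep]; rfl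
      _ = (fun q => (a :: w).foldl g q) '' C := by rw [ih, Set.image_image]; rfl

theorem finRotate_symm_apply_of_val_eq_add_one {m : ℕ} {i j : Fin m} (h : (i : ℕ) = j + 1) :
    (finRotate m).symm i = j := by
  obtain ⟨n, rfl⟩ : ∃ n, m = n + 1 := ⟨m - 1, by lia⟩
  rw [Equiv.symm_apply_eq]
  ext
  rw [coe_finRotate_of_ne_last (Fin.ne_of_lt (show (j : ℕ) < n by lia)), h]

theorem finRotate_symm_apply_of_val_eq_zero {m : ℕ} {i j : Fin m} (hi : (i : ℕ) = 0)
    (hj : (j : ℕ) + 1 = m) : (finRotate m).symm i = j := by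
  obtain ⟨n, rfl⟩ : ∃ n, m = n + 1 := ⟨m - 1, by lia⟩
  obtain rfl : j = Fin.last n := Fin.ext (by simpa using hj)
  rw [Equiv.symm_apply_eq, finRotate_last]
  exact Fin.ext hi

namespace EqState

variable {m : ℕ}

/-- The two variables compared by the gadget. -/
inductive Var where
  | u : Var
  | v : Var

/-- The literal of a variable `x`: the state recording that bit `i` of `x` has value `b`. The
barred states record the value `false`. -/
def lit : Var → Bool → Fin m → EqState m
  | .u, true => u
  | .u, false => ubar
  | .v, true => v
  | .v, false => vbar

/-- One step of a family `s` of variable states recording the value `b`: position `0` is tested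
against the letter read, and the indices rotate downwards. -/
def testRotate (s : Fin m → EqState m) (b : Bool) (i : Fin m) (a : Bool) : EqState m :=
  if (i : ℕ) = 0 ∧ a ≠ b then acc else s ((finRotate m).symm i)

/-- The transition function of the gadget, which is deterministic. -/
def step : EqState m → Bool → EqState m
  | acc, _ => acc
  | p i, _ => Fin.lastCases acc (fun j => p j.succ) i
  | u i, a => testRotate u true i a
  | ubar i, a => testRotate ubar false i a
  | v i, a => testRotate v true i a
  | vbar i, a => testRotate vbar false i a

/-- The Equality Gadget, with `step` regarded as a nondeterministic transition function. -/
def gadget (m : ℕ) (q : EqState m) (a : Bool) : Set (EqState m) :=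
  {step q a}

/-- The set of variable states encoding the values `val x` of the variables `x`. -/
def assignment (val : Var → Fin m → Bool) : Set (EqState m) :=
  {q | ∃ x i, lit x (val x i) i = q}

theorem step_lit (x : Var) (b : Bool) (i : Fin m) (a : Bool) :
    step (lit x b i) a = testRotate (lit x b) b i a := by
  cases x <;> cases b <;> rfl

theorem lit_inj {x y : Var} {b c : Bool} {i j : Fin m} :
    lit x b i = lit y c j ↔ x = y ∧ b = c ∧ i = j := by
  cases x <;> cases b <;> cases y <;> cases c <;> simp [lit]

theorem lit_ne_acc (x : Var) (b : Bool) (i : Fin m) : lit x b i ≠ acc := by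
  cases x <;> cases b <;> nofun

theorem foldl_step_acc (w : List Bool) : w.foldl step (acc : EqState m) = acc :=
  List.foldl_fixed' (fun _ => rfl) w

theorem foldl_step_p {i j : Fin (m + 1)} {w : List Bool} (h : (j : ℕ) = i + w.length) :
    w.foldl step (p i) = p j := by
  induction w generalizing i with
  | nil => rw [Fin.ext h, List.foldl_nil]
  | cons a w ih =>
    rw [List.length_cons] at h
    cases i using Fin.lastCases with
    | last => simp only [Fin.val_last] at h; lia
    | cast i =>
      rw [List.foldl_cons, step, Fin.lastCases_castSucc]
      exact ih (by simp only [Fin.val_castSucc, Fin.val_succ] at h ⊢; lia)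

theorem foldl_step_p_eq_acc {i : Fin (m + 1)} {w : List Bool} (h : m < i + w.length) :
    w.foldl step (p i) = acc := by
  induction w generalizing i with
  | nil => rw [List.length_nil] at h; lia
  | cons a w ih =>
    rw [List.length_cons] at h
    rw [List.foldl_cons, step]
    cases i using Fin.lastCases with
    | last => rw [Fin.lastCases_last, foldl_step_acc]
    | cast i =>
      rw [Fin.lastCases_castSucc]
      exact ih (by simp only [Fin.val_castSucc, Fin.val_succ] at h ⊢; lia)

theorem foldl_step_lit_of_val_eq_add (x : Var) (b : Bool) {i j : Fin m} {w : List Bool}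
    (h : (i : ℕ) = j + w.length) : w.foldl step (lit x b i) = lit x b j := by
  induction w generalizing i with
  | nil => rw [Fin.ext h, List.foldl_nil]
  | cons a w ih =>
    rw [List.length_cons] at h
    have hrot : (finRotate m).symm i = ⟨j + w.length, by lia⟩ :=
      finRotate_symm_apply_of_val_eq_add_one (by lia)
    rw [List.foldl_cons, step_lit, testRotate, if_neg (by lia), hrot]
    exact ih rfl

theorem foldl_step_lit (x : Var) (b : Bool) (i : Fin m) {w : List Bool} (hw : w.length = m) :
    w.foldl step (lit x b i) = if w[i] = b then lit x b i else acc := by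
  have hsplit : w = w.take i ++ w[i] :: w.drop (i + 1) := by simp
  have hreach : (w.take i).foldl step (lit x b i) = lit x b ⟨0, i.pos⟩ :=
    foldl_step_lit_of_val_eq_add x b (by simp [hw, i.isLt.le])
  have htest : step (lit x b ⟨0, i.pos⟩) w[i] =
      if w[i] = b then lit x b ⟨m - 1, by lia⟩ else acc := by
    have hrot : (finRotate m).symm ⟨0, i.pos⟩ = ⟨m - 1, by lia⟩ :=
      finRotate_symm_apply_of_val_eq_zero rfl (Nat.sub_add_cancel i.pos)
    simp only [step_lit, testRotate, hrot, true_and, ne_eq, ite_not]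
  have hreturn : (w.drop (i + 1)).foldl step (lit x b ⟨m - 1, by lia⟩) = lit x b i :=
    foldl_step_lit_of_val_eq_add x b (by simp only [List.length_drop]; lia)
  conv_lhs => rw [hsplit, List.foldl_append, List.foldl_cons, hreach, htest]
  split_ifs
  · exact hreturn
  · exact foldl_step_acc _

theorem mem_varStates_iff {q : EqState m} : q ∈ varStates m ↔ ∃ x b i, q = lit x b i := by
  constructor
  · rintro ⟨i, rfl | rfl | rfl | rfl⟩
    exacts [⟨.u, true, i, rfl⟩, ⟨.u, false, i, rfl⟩, ⟨.v, true, i, rfl⟩, ⟨.v, false, i, rfl⟩]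
  · rintro ⟨x, b, i, rfl⟩
    cases x <;> cases b <;> simp [varStates, lit]

theorem lit_mem_assignment {val : Var → Fin m → Bool} {x : Var} {b : Bool} {i : Fin m} :
    lit x b i ∈ assignment val ↔ val x i = b := by
  constructor
  · rintro ⟨y, j, h⟩
    obtain ⟨rfl, rfl, rfl⟩ := lit_inj.mp h
    rfl
  · rintro rfl
    exact ⟨x, i, rfl⟩

theorem exists_inter_varStates_eq_assignment {C : Set (EqState m)}
    (hu : ∀ i, u i ∈ C ↔ ubar i ∉ C) (hv : ∀ i, v i ∈ C ↔ vbar i ∉ C) :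
    ∃ val, C ∩ varStates m = assignment val := by
  classical
  let val (x : Var) (i : Fin m) : Bool := decide (lit x true i ∈ C)
  have hvalid (x : Var) (i : Fin m) : lit x true i ∈ C ↔ lit x false i ∉ C := by
    cases x
    exacts [hu i, hv i]
  have hlit (x : Var) (b : Bool) (i : Fin m) : lit x b i ∈ C ↔ val x i = b := by
    cases b <;> simp [val, hvalid]
  refine ⟨val, Set.Subset.antisymm ?_ ?_⟩
  · rintro q ⟨hqC, hq⟩
    obtain ⟨x, b, i, rfl⟩ := mem_varStates_iff.mp hq
    exact lit_mem_assignment.mpr ((hlit x b i).mp hqC)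
  · rintro _ ⟨x, i, rfl⟩
    exact ⟨(hlit x _ i).mpr rfl, mem_varStates_iff.mpr ⟨x, _, i, rfl⟩⟩

theorem eq_singleton_union_inter_varStates {C : Set (EqState m)} (hp₀ : p 0 ∈ C) (hacc : acc ∉ C)
    (hp : ∀ i ≠ 0, p i ∉ C) : C = {p 0} ∪ C ∩ varStates m := by
  refine Set.Subset.antisymm (fun q hq => ?_)
    (Set.union_subset (Set.singleton_subset_iff.mpr hp₀) Set.inter_subset_left)
  cases q with
  | acc => exact absurd hq hacc
  | p i =>
    obtain rfl : i = 0 := by_contra fun hi => hp i hi hq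
    exact .inl rfl
  | u i | ubar i | v i | vbar i => exact .inr ⟨hq, i, by simp⟩

theorem forall_u_mem_iff_v_mem {val : Var → Fin m → Bool} :
    (∀ i, u i ∈ ({p 0} ∪ assignment val : Set (EqState m)) ↔ v i ∈ {p 0} ∪ assignment val) ↔
      val .u = val .v := by
  have hu (i : Fin m) : u i ∈ ({p 0} ∪ assignment val : Set (EqState m)) ↔ val .u i = true := by
    simpa [lit] using lit_mem_assignment (x := .u) (b := true)
  have hv (i : Fin m) : v i ∈ ({p 0} ∪ assignment val : Set (EqState m)) ↔ val .v i = true := by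
    simpa [lit] using lit_mem_assignment (x := .v) (b := true)
  simp only [hu, hv, ← Bool.eq_iff_iff, funext_iff]

theorem evalFrom_gadget (C : Set (EqState m)) (w : List Bool) :
    evalFrom (gadget m) C w = (fun q => w.foldl step q) '' C :=
  evalFrom_singleton step C w

theorem acc_mem_evalFrom_gadget_of_length_lt {C : Set (EqState m)} (hp₀ : p 0 ∈ C) {w : List Bool}
    (hw : m < w.length) : acc ∈ evalFrom (gadget m) C w := by
  rw [evalFrom_gadget]
  exact ⟨p 0, hp₀, foldl_step_p_eq_acc (by simpa using hw)⟩

theorem evalFrom_gadget_assignment {val : Var → Fin m → Bool} {w : List Bool}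
    (hw : w.length = m) (hval : ∀ x, w = List.ofFn (val x)) :
    evalFrom (gadget m) ({p 0} ∪ assignment val) w = {p (Fin.last m)} ∪ assignment val := by
  have hfix : Set.EqOn (fun q => w.foldl step q) id (assignment val) := by
    rintro _ ⟨x, i, rfl⟩
    exact (foldl_step_lit x _ i hw).trans (if_pos (by simp [hval x]))
  rw [evalFrom_gadget, Set.image_union, Set.image_singleton, hfix.image_eq, Set.image_id,
    foldl_step_p (j := Fin.last m) (by simp [hw])]

theorem eq_ofFn_of_acc_notMem_evalFrom_gadget {val : Var → Fin m → Bool} {w : List Bool}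
    (hw : w.length = m) (hacc : acc ∉ evalFrom (gadget m) ({p 0} ∪ assignment val) w) (x : Var) :
    w = List.ofFn (val x) := by
  refine List.ext_getElem (by simp [hw]) fun i hi _ => ?_
  lift i to Fin m using hw ▸ hi
  rw [List.getElem_ofFn]
  by_contra hne
  refine hacc ?_
  rw [evalFrom_gadget]
  exact ⟨lit x (val x i) i, .inr ⟨x, i, rfl⟩, (foldl_step_lit x _ i hw).trans (if_neg hne)⟩

theorem acc_notMem_singleton_union_assignment (i : Fin (m + 1)) (val : Var → Fin m → Bool) :
    acc ∉ ({p i} ∪ assignment val : Set (EqState m)) := by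
  rintro (h | ⟨x, i, h⟩)
  · cases h
  · exact lit_ne_acc x _ i h

end EqState

/-- The Equality Gadget: a nondeterministic transition system over a two-letter alphabet on
`5m + 2` states checking equality of two valid variables. From any configuration `C` containing
`p 0`, none of `acc, p 1, …, p m`, with both variables valid: (i) if the variables agree, some
word of length `m` avoids `acc` and reaches `{p m} ∪ (C ∩ varStates)`, and every word of length
`m` avoiding `acc` reaches exactly this configuration; (ii) if the variables differ, every word
of length `≥ m` reaches `acc`; (iii) every word of length `> m` reaches `acc`. -/
theorem equality_gadget (m : ℕ) (hm : 1 ≤ m) :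
    ∃ δ : EqState m → Bool → Set (EqState m),
      (∀ a : Bool, δ EqState.acc a = {EqState.acc}) ∧
      ∀ C : Set (EqState m),
        EqState.p 0 ∈ C →
        EqState.acc ∉ C →
        (∀ i : Fin (m + 1), i ≠ 0 → EqState.p i ∉ C) →
        (∀ i : Fin m, EqState.u i ∈ C ↔ EqState.ubar i ∉ C) →
        (∀ i : Fin m, EqState.v i ∈ C ↔ EqState.vbar i ∉ C) →
        (((∀ i : Fin m, EqState.u i ∈ C ↔ EqState.v i ∈ C) →
            ((∃ w : List Bool, w.length = m ∧ EqState.acc ∉ evalFrom δ C w ∧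
                evalFrom δ C w = {EqState.p (Fin.last m)} ∪ (C ∩ EqState.varStates m)) ∧
             (∀ w : List Bool, w.length = m → EqState.acc ∉ evalFrom δ C w →
                evalFrom δ C w = {EqState.p (Fin.last m)} ∪ (C ∩ EqState.varStates m)))) ∧
         ((∃ i : Fin m, ¬(EqState.u i ∈ C ↔ EqState.v i ∈ C)) →
            ∀ w : List Bool, m ≤ w.length → EqState.acc ∈ evalFrom δ C w) ∧
         (∀ w : List Bool, m < w.length → EqState.acc ∈ evalFrom δ C w)) := by
  open EqState in
  refine ⟨gadget m, fun _ => rfl, fun C hp₀ hacc hp hu hv => ?_⟩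
  obtain ⟨val, hval⟩ := exists_inter_varStates_eq_assignment hu hv
  obtain rfl : C = {p 0} ∪ assignment val :=
    hval ▸ eq_singleton_union_inter_varStates hp₀ hacc hp
  rw [hval, ← not_forall, forall_u_mem_iff_v_mem]
  refine ⟨fun heq => ⟨?_, fun w hw hw_acc => ?_⟩, fun hne w hw => ?_, fun w hw => ?_⟩
  · have heval := evalFrom_gadget_assignment (val := val) (w := List.ofFn (val .u))
      List.length_ofFn (by rintro (_ | _) <;> simp [heq])
    refine ⟨List.ofFn (val .u), List.length_ofFn, ?_, heval⟩
    exact heval ▸ acc_notMem_singleton_union_assignment _ val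
  · exact evalFrom_gadget_assignment hw (eq_ofFn_of_acc_notMem_evalFrom_gadget hw hw_acc)
  · rcases hw.eq_or_lt with hw | hw
    · by_contra hw_acc
      have hspell := eq_ofFn_of_acc_notMem_evalFrom_gadget hw.symm hw_acc
      exact hne (List.ofFn_injective ((hspell .u).symm.trans (hspell .v)))
    · exact acc_mem_evalFrom_gadget_of_length_lt hp₀ hw
  · exact acc_mem_evalFrom_gadget_of_length_lt hp₀ hw
end
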